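/- For every 1 < q < +∞ there exists a constant C_q > 0 such that for every divergence-free Schwartz vector field u : ℝ³ → ℝ³ (i.e. each component of u is a Schwartz function and ∇·u = 0), with vorticity ω = ∇ × u, one has ‖∇u₃‖_{L^q} + ‖∂₃u‖_{L^q} ≤ C_q ‖e₃ × ω‖_{L^q}. -/

import Mathlib

open MeasureTheory

noncomputable section

/-- The standard basis vectors of `EuclideanSpace ℝ (Fin 3)`. -/
def ee (i : Fin 3) : EuclideanSpace ℝ (Fin 3) := EuclideanSpace.single i 1

/-- The partial derivative `∂ᵢ uⱼ` of a vector field given by its three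
(Schwartz) components. -/
def pdW (u : Fin 3 → SchwartzMap (EuclideanSpace ℝ (Fin 3)) ℝ) (i j : Fin 3)
    (x : EuclideanSpace ℝ (Fin 3)) : ℝ :=
  fderiv ℝ (u j) x (ee i)

/-- View a triple of reals as a vector in `ℝ³` with the Euclidean norm. -/
def toE3 (f : Fin 3 → ℝ) : EuclideanSpace ℝ (Fin 3) :=
  (WithLp.equiv 2 (Fin 3 → ℝ)).symm f

/-- The vorticity `ω = ∇ × u` (with 0-based indices). -/
def vortW (u : Fin 3 → SchwartzMap (EuclideanSpace ℝ (Fin 3)) ℝ)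
    (x : EuclideanSpace ℝ (Fin 3)) : Fin 3 → ℝ :=
  ![pdW u 1 2 x - pdW u 2 1 x, pdW u 2 0 x - pdW u 0 2 x, pdW u 0 1 x - pdW u 1 0 x]

/-- The cross product in `ℝ³`. -/
def cross (a b : Fin 3 → ℝ) : Fin 3 → ℝ :=
  ![a 1 * b 2 - a 2 * b 1, a 2 * b 0 - a 0 * b 2, a 0 * b 1 - a 1 * b 0]

open SchwartzMap LineDeriv Real Filter Topology

section Heat

variable {E : Type*} [NormedAddCommGroup E] [InnerProductSpace ℝ E]

/-- The standard Gaussian density on a Euclidean space. -/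
def gaussDensity (z : E) : ℝ :=
  ((π / (1 / 2)) ^ ((Module.finrank ℝ E : ℝ) / 2))⁻¹ * rexp (-(1 / 2) * ‖z‖ ^ 2)

lemma gaussDensity_nonneg (z : E) : 0 ≤ gaussDensity z := by
  unfold gaussDensity; positivity

lemma gaussDensity_le (z : E) : gaussDensity z ≤ gaussDensity (0 : E) := by
  unfold gaussDensity
  refine mul_le_mul_of_nonneg_left (exp_le_exp.2 ?_) (by positivity)
  simp

lemma continuous_gaussDensity : Continuous (gaussDensity : E → ℝ) := by
  unfold gaussDensity; fun_prop

lemma hasLineDerivAt_gaussDensity (z v : E) :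
    HasLineDerivAt ℝ gaussDensity (-(inner ℝ v z * gaussDensity z)) z v := by
  have h1 : HasDerivAt (fun s : ℝ => z + s • v) v 0 := by
    simpa using ((hasDerivAt_id (0 : ℝ)).smul_const v).const_add z
  have h2 := (h1.norm_sq.const_mul (-(1 / 2) : ℝ)).exp.const_mul
    ((π / (1 / 2)) ^ ((Module.finrank ℝ E : ℝ) / 2))⁻¹
  unfold HasLineDerivAt gaussDensity
  refine h2.congr_deriv ?_
  simp only [zero_smul, add_zero, real_inner_comm z v]
  ring

lemma SchwartzMap.exists_abs_le (f : 𝓢(E, ℝ)) : ∃ M, 0 ≤ M ∧ ∀ x, |f x| ≤ M :=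
  ⟨SchwartzMap.seminorm ℝ 0 0 f, apply_nonneg _ _, fun x => f.norm_le_seminorm ℝ x⟩

lemma SchwartzMap.exists_norm_fderiv_le (f : 𝓢(E, ℝ)) : ∃ M, 0 ≤ M ∧ ∀ x, ‖fderiv ℝ f x‖ ≤ M :=
  ⟨SchwartzMap.seminorm ℝ 0 0 (SchwartzMap.fderivCLM ℝ E ℝ f), apply_nonneg _ _,
    fun x => (SchwartzMap.fderivCLM ℝ E ℝ f).norm_le_seminorm ℝ x⟩

variable [FiniteDimensional ℝ E] [MeasurableSpace E] [BorelSpace E]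

lemma integrable_exp_neg_mul_sq_norm {b : ℝ} (hb : 0 < b) :
    Integrable (fun z : E => rexp (-b * ‖z‖ ^ 2)) := by
  have h := GaussianFourier.integrable_cexp_neg_mul_sq_norm_add (V := E) (b := (b : ℂ))
    (by simpa using hb) 0 0
  refine h.norm.congr (Eventually.of_forall fun z => ?_)
  simp only [Complex.norm_exp]
  congr 1
  simp [← Complex.ofReal_pow]

lemma integrable_gaussDensity : Integrable (gaussDensity : E → ℝ) :=
  (integrable_exp_neg_mul_sq_norm (by norm_num)).const_mul _

lemma integral_gaussDensity : ∫ z : E, gaussDensity z = 1 := by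
  unfold gaussDensity
  rw [integral_const_mul, GaussianFourier.integral_rexp_neg_mul_sq_norm (by norm_num)]
  exact inv_mul_cancel₀ (by positivity)

lemma integrable_norm_mul_gaussDensity : Integrable (fun z : E => ‖z‖ * gaussDensity z) := by
  have h := ((integrable_exp_neg_mul_sq_norm (E := E) (b := 1 / 4) (by norm_num)).const_mul
    (2 * ((π / (1 / 2)) ^ ((Module.finrank ℝ E : ℝ) / 2))⁻¹))
  refine h.mono' (continuous_norm.mul continuous_gaussDensity).aestronglyMeasurable
    (Eventually.of_forall fun z => ?_)
  rw [norm_of_nonneg (mul_nonneg (norm_nonneg z) (gaussDensity_nonneg z))]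
  unfold gaussDensity
  have h1 : ‖z‖ ≤ 2 * rexp (1 / 4 * ‖z‖ ^ 2) := by
    have := add_one_le_exp (1 / 4 * ‖z‖ ^ 2)
    nlinarith [sq_nonneg (‖z‖ - 1)]
  have h2 : rexp (1 / 4 * ‖z‖ ^ 2) * rexp (-(1 / 2) * ‖z‖ ^ 2) = rexp (-(1 / 4) * ‖z‖ ^ 2) := by
    rw [← Real.exp_add]; ring_nf
  calc ‖z‖ * (((π / (1 / 2)) ^ ((Module.finrank ℝ E : ℝ) / 2))⁻¹ * rexp (-(1 / 2) * ‖z‖ ^ 2))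
      ≤ (2 * rexp (1 / 4 * ‖z‖ ^ 2)) *
        (((π / (1 / 2)) ^ ((Module.finrank ℝ E : ℝ) / 2))⁻¹ * rexp (-(1 / 2) * ‖z‖ ^ 2)) := by
        gcongr
    _ = _ := by rw [← h2]; ring

/-- The heat flow (with generator `Δ / 2`) of a function, at time `t`. -/
def heat (t : ℝ) (f : E → ℝ) (x : E) : ℝ := ∫ z, f (x + √t • z) * gaussDensity z

lemma heat_zero (f : E → ℝ) (x : E) : heat 0 f x = f x := by
  simp [heat, integral_const_mul, integral_gaussDensity]

lemma integrable_comp_mul_gaussDensity (f : 𝓢(E, ℝ)) (t : ℝ) (x : E) :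
    Integrable (fun z => f (x + √t • z) * gaussDensity z) := by
  obtain ⟨M, -, hM⟩ := f.exists_abs_le
  exact integrable_gaussDensity.bdd_mul (by fun_prop)
    (Eventually.of_forall fun z => hM _)

lemma heat_sum {ι : Type*} (s : Finset ι) (f : ι → 𝓢(E, ℝ)) (t : ℝ) (x : E) :
    heat t (∑ i ∈ s, f i : 𝓢(E, ℝ)) x = ∑ i ∈ s, heat t (f i) x := by
  simp only [heat, sum_apply, Finset.sum_mul]
  exact integral_finsetSum _ fun i _ => integrable_comp_mul_gaussDensity (f i) t x

lemma abs_heat_le {f : 𝓢(E, ℝ)} {M : ℝ} (hM : ∀ x, |f x| ≤ M) (t : ℝ) (x : E) :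
    |heat t f x| ≤ M := by
  unfold heat
  calc |∫ z, f (x + √t • z) * gaussDensity z| ≤ ∫ z : E, M * gaussDensity z := by
        rw [← Real.norm_eq_abs]
        refine norm_integral_le_of_norm_le ((integrable_gaussDensity (E := E)).const_mul M)
          (Eventually.of_forall fun z => ?_)
        rw [norm_mul, norm_of_nonneg (gaussDensity_nonneg z)]
        exact mul_le_mul_of_nonneg_right (hM _) (gaussDensity_nonneg z)
    _ = M := by rw [integral_const_mul, integral_gaussDensity, mul_one]

lemma continuous_heat (f : 𝓢(E, ℝ)) : Continuous fun p : ℝ × E => heat p.1 f p.2 := by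
  obtain ⟨M, -, hM⟩ := f.exists_abs_le
  unfold heat
  refine continuous_of_dominated (bound := fun z => M * gaussDensity z) (fun p => ?_) (fun p => ?_)
    (integrable_gaussDensity.const_mul M) (Eventually.of_forall fun z => by fun_prop)
  · exact (integrable_comp_mul_gaussDensity f p.1 p.2).aestronglyMeasurable
  · refine Eventually.of_forall fun z => ?_
    rw [norm_mul, norm_of_nonneg (gaussDensity_nonneg z)]
    exact mul_le_mul_of_nonneg_right (hM _) (gaussDensity_nonneg z)

lemma integrable_prod_heat_integrand (f : 𝓢(E, ℝ)) (t : ℝ) :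
    Integrable (fun p : E × E => f (p.1 + √t • p.2) * gaussDensity p.2) (volume.prod volume) := by
  have hc : Continuous (fun p : E × E => f (p.1 + √t • p.2) * gaussDensity p.2) := by
    have := continuous_gaussDensity (E := E); fun_prop
  rw [integrable_prod_iff' hc.aestronglyMeasurable]
  refine ⟨Eventually.of_forall fun z =>
    ((f.integrable (μ := volume)).comp_add_right (√t • z)).mul_const (gaussDensity z), ?_⟩
  refine ((integrable_gaussDensity (E := E)).const_mul (∫ x, ‖f x‖)).congr
    (Eventually.of_forall fun z => ?_)
  simp only [norm_mul, integral_mul_const, norm_of_nonneg (gaussDensity_nonneg z),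
    integral_add_right_eq_self (fun x => ‖f x‖)]

lemma integrable_heat (f : 𝓢(E, ℝ)) (t : ℝ) : Integrable (heat t f) :=
  (integrable_prod_heat_integrand f t).integral_prod_left

lemma integral_abs_heat_le (f : 𝓢(E, ℝ)) (t : ℝ) : ∫ x, |heat t f x| ≤ ∫ x, |f x| := by
  have h := integrable_prod_heat_integrand f t
  calc ∫ x, |heat t f x| ≤ ∫ x, ∫ z, ‖f (x + √t • z) * gaussDensity z‖ :=
        integral_mono (integrable_heat f t).abs h.norm.integral_prod_left
          fun x => norm_integral_le_integral_norm (fun z => f (x + √t • z) * gaussDensity z)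
    _ = ∫ z, ∫ x, ‖f (x + √t • z) * gaussDensity z‖ := integral_integral_swap h.norm
    _ = ∫ z : E, (∫ x, |f x|) * gaussDensity z := by
        congr 1 with z
        simp only [norm_mul, integral_mul_const, norm_of_nonneg (gaussDensity_nonneg z),
          integral_add_right_eq_self (fun x => ‖f x‖)]
        rfl
    _ = _ := by rw [integral_const_mul, integral_gaussDensity, mul_one]

lemma abs_heat_le_integral (f : 𝓢(E, ℝ)) {t : ℝ} (ht : 0 < t) (x : E) :
    |heat t f x| ≤ gaussDensity (0 : E) * (∫ y, |f y|) * (√t ^ Module.finrank ℝ E)⁻¹ := by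
  have hf : Integrable (fun y : E => |f (x + y)|) :=
    ((f.integrable (μ := volume)).comp_add_left x).abs
  have h0 : √t ≠ 0 := (Real.sqrt_pos.2 ht).ne'
  calc |heat t f x| ≤ ∫ z, gaussDensity (0 : E) * |f (x + √t • z)| := by
        unfold heat
        rw [← Real.norm_eq_abs]
        refine norm_integral_le_of_norm_le ((hf.comp_smul h0).const_mul (gaussDensity (0 : E)))
          (Eventually.of_forall fun z => ?_)
        rw [norm_mul, norm_of_nonneg (gaussDensity_nonneg z), mul_comm]
        exact mul_le_mul_of_nonneg_right (gaussDensity_le z) (abs_nonneg _)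
    _ = _ := by
        rw [integral_const_mul, Measure.integral_comp_smul volume (fun y => |f (x + y)|) (√t),
          integral_add_left_eq_self (fun y => |f y|), abs_of_nonneg (by positivity), smul_eq_mul]
        ring

lemma hasLineDerivAt_heat (f : 𝓢(E, ℝ)) (t : ℝ) (x v : E) :
    HasLineDerivAt ℝ (heat t f) (heat t (∂_{v} f : 𝓢(E, ℝ)) x) x v := by
  obtain ⟨M, -, hM⟩ := (∂_{v} f : 𝓢(E, ℝ)).exists_abs_le
  have h := hasDerivAt_integral_of_dominated_loc_of_deriv_le (μ := (volume : Measure E))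
    (F := fun (s : ℝ) z => f (x + s • v + √t • z) * gaussDensity z)
    (F' := fun (s : ℝ) z => (∂_{v} f : 𝓢(E, ℝ)) (x + s • v + √t • z) * gaussDensity z)
    (x₀ := 0) (bound := fun z => M * gaussDensity z) (s := Set.univ) univ_mem
    (Eventually.of_forall fun s =>
      (integrable_comp_mul_gaussDensity f t (x + s • v)).aestronglyMeasurable)
    (integrable_comp_mul_gaussDensity f t (x + (0 : ℝ) • v))
    (integrable_comp_mul_gaussDensity _ t (x + (0 : ℝ) • v)).aestronglyMeasurable
    (Eventually.of_forall fun z s _ => by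
      rw [norm_mul, norm_of_nonneg (gaussDensity_nonneg z)]
      exact mul_le_mul_of_nonneg_right (hM _) (gaussDensity_nonneg z))
    (integrable_gaussDensity.const_mul M)
    (Eventually.of_forall fun z s _ => by
      refine HasDerivAt.mul_const ?_ _
      have h1 : HasDerivAt (fun s : ℝ => x + s • v + √t • z) v s := by
        simpa using (((hasDerivAt_id s).smul_const v).const_add x).add_const (√t • z)
      exact (f.hasFDerivAt _).comp_hasDerivAt s h1)
  have h2 := h.2
  simp only [zero_smul, add_zero] at h2
  exact h2

lemma integral_lineDeriv_mul_inner_gaussDensity (g : 𝓢(E, ℝ)) {t : ℝ} (x v : E) :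
    ∫ z, g (x + √t • z) * (inner ℝ v z * gaussDensity z) =
      √t * heat t (∂_{v} g : 𝓢(E, ℝ)) x := by
  have hi : Integrable (fun z : E => g (x + √t • z) * -(inner ℝ v z * gaussDensity z)) := by
    obtain ⟨M, -, hM⟩ := g.exists_abs_le
    refine Integrable.bdd_mul ?_ (by fun_prop) (Eventually.of_forall fun z => hM _)
    refine (integrable_norm_mul_gaussDensity.const_mul ‖v‖).mono'
      (by have := continuous_gaussDensity (E := E); fun_prop)
      (Eventually.of_forall fun z => ?_)
    rw [norm_neg, norm_mul, norm_of_nonneg (gaussDensity_nonneg z), ← mul_assoc]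
    exact mul_le_mul_of_nonneg_right (norm_inner_le_norm v z) (gaussDensity_nonneg z)
  have h := integral_bilinear_hasLineDerivAt_right_eq_neg_left_of_integrable
    (μ := (volume : Measure E)) (B := ContinuousLinearMap.mul ℝ ℝ) (v := v)
    (f := fun z => g (x + √t • z)) (f' := fun z => √t * (∂_{v} g : 𝓢(E, ℝ)) (x + √t • z))
    (g := gaussDensity) (g' := fun z => -(inner ℝ v z * gaussDensity z))
    (by simpa [mul_assoc] using (integrable_comp_mul_gaussDensity (∂_{v} g) t x).const_mul √t)
    (by simpa using hi) (by simpa using integrable_comp_mul_gaussDensity g t x)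
    (fun z _ => by
      have h1 : HasDerivAt (fun s : ℝ => x + √t • (z + s • v)) (√t • v) 0 := by
        simpa using ((((hasDerivAt_id (0 : ℝ)).smul_const v).const_add z).const_smul √t).const_add x
      have h2 := (g.hasFDerivAt _).comp_hasDerivAt (0 : ℝ) h1
      simpa [HasLineDerivAt, Function.comp_def, lineDerivOp_apply_eq_fderiv] using h2)
    (fun z _ => hasLineDerivAt_gaussDensity z v)
  simp only [ContinuousLinearMap.mul_apply', mul_neg, integral_neg, neg_inj, mul_assoc,
    integral_const_mul] at h
  exact h

lemma hasDerivAt_heat {ι : Type*} [Fintype ι] (b : OrthonormalBasis ι ℝ E) (f : 𝓢(E, ℝ)) {t : ℝ}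
    (ht : 0 < t) (x : E) :
    HasDerivAt (fun s => heat s f x)
      (1 / 2 * ∑ k, heat t (∂_{b k} (∂_{b k} f : 𝓢(E, ℝ)) : 𝓢(E, ℝ)) x) t := by
  obtain ⟨M, hM0, hM⟩ := f.exists_norm_fderiv_le
  have hst : 0 < √(t / 2) := Real.sqrt_pos.2 (by positivity)
  have h := hasDerivAt_integral_of_dominated_loc_of_deriv_le (μ := (volume : Measure E))
    (F := fun (s : ℝ) z => f (x + √s • z) * gaussDensity z)
    (F' := fun (s : ℝ) z => fderiv ℝ f (x + √s • z) ((1 / (2 * √s)) • z) * gaussDensity z)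
    (x₀ := t) (bound := fun z => M * (1 / (2 * √(t / 2))) * (‖z‖ * gaussDensity z))
    (s := Set.Ioi (t / 2)) (Ioi_mem_nhds (by linarith))
    (Eventually.of_forall fun s =>
      (integrable_comp_mul_gaussDensity f s x).aestronglyMeasurable)
    (integrable_comp_mul_gaussDensity f t x)
    (by
      have h1 := continuous_gaussDensity (E := E)
      have h2 : Continuous (fderiv ℝ f) := (f.smooth 1).continuous_fderiv (by simp)
      exact Continuous.aestronglyMeasurable (by fun_prop))
    (Eventually.of_forall fun z s (hs : t / 2 < s) => by
      rw [norm_mul, norm_of_nonneg (gaussDensity_nonneg z), ← mul_assoc]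
      refine mul_le_mul_of_nonneg_right ?_ (gaussDensity_nonneg z)
      refine (ContinuousLinearMap.le_opNorm _ _).trans ?_
      rw [norm_smul, norm_of_nonneg (by positivity), ← mul_assoc]
      gcongr
      exact hM _)
    (integrable_norm_mul_gaussDensity.const_mul _)
    (Eventually.of_forall fun z s (hs : t / 2 < s) => by
      refine HasDerivAt.mul_const ?_ _
      have h1 : HasDerivAt (fun s : ℝ => x + √s • z) ((1 / (2 * √s)) • z) s :=
        ((Real.hasDerivAt_sqrt (by linarith)).smul_const z).const_add x
      exact (f.hasFDerivAt _).comp_hasDerivAt s h1)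
  refine h.2.congr_deriv ?_
  have h0 : √t ≠ 0 := (Real.sqrt_pos.2 ht).ne'
  have key : ∀ z : E, fderiv ℝ f (x + √t • z) ((1 / (2 * √t)) • z) * gaussDensity z =
      ∑ k, (1 / (2 * √t)) *
        ((∂_{b k} f : 𝓢(E, ℝ)) (x + √t • z) * (inner ℝ (b k) z * gaussDensity z)) := by
    intro z
    have hz : fderiv ℝ f (x + √t • z) z =
        ∑ k, inner ℝ (b k) z * fderiv ℝ f (x + √t • z) (b k) := by
      generalize fderiv ℝ f (x + √t • z) = L
      conv_lhs => rw [← b.sum_repr' z]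
      simp
    rw [map_smul, hz, smul_eq_mul, Finset.mul_sum, Finset.sum_mul]
    refine Finset.sum_congr rfl fun k _ => ?_
    rw [lineDerivOp_apply_eq_fderiv]
    ring
  have hi : ∀ k, Integrable (fun z : E => (∂_{b k} f : 𝓢(E, ℝ)) (x + √t • z) *
      (inner ℝ (b k) z * gaussDensity z)) := by
    intro k
    obtain ⟨M, -, hM⟩ := (∂_{b k} f : 𝓢(E, ℝ)).exists_abs_le
    refine Integrable.bdd_mul ?_ (by fun_prop) (Eventually.of_forall fun z => hM _)
    refine (integrable_norm_mul_gaussDensity.const_mul ‖b k‖).mono'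
      (by have := continuous_gaussDensity (E := E); fun_prop)
      (Eventually.of_forall fun z => ?_)
    rw [norm_mul, norm_of_nonneg (gaussDensity_nonneg z), ← mul_assoc]
    exact mul_le_mul_of_nonneg_right (norm_inner_le_norm _ z) (gaussDensity_nonneg z)
  simp only [key]
  rw [integral_finsetSum _ fun k _ => (hi k).const_mul _]
  simp only [integral_const_mul, integral_lineDeriv_mul_inner_gaussDensity, Finset.mul_sum]
  refine Finset.sum_congr rfl fun k _ => ?_
  field_simp

end Heat

/-- `Φ` is continuous on `ℝ²` and has partial derivatives `Φx`, `Φy`, in the form of a chain rule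
along curves. -/
structure HasPartials (Φ Φx Φy : ℝ → ℝ → ℝ) : Prop where
  continuous : Continuous fun p : ℝ × ℝ => Φ p.1 p.2
  chain : ∀ {u v : ℝ → ℝ} {u' v' s : ℝ}, HasDerivAt u u' s → HasDerivAt v v' s →
    HasDerivAt (fun r => Φ (u r) (v r)) (Φx (u s) (v s) * u' + Φy (u s) (v s) * v') s

section Flow

variable {E : Type*} [NormedAddCommGroup E] [InnerProductSpace ℝ E] [FiniteDimensional ℝ E]
  [MeasurableSpace E] [BorelSpace E]

lemma exists_abs_comp_heat_le {Φ : ℝ → ℝ → ℝ} (hΦ : Continuous fun p : ℝ × ℝ => Φ p.1 p.2)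
    (f g : 𝓢(E, ℝ)) : ∃ C, ∀ t x, |Φ (heat t f x) (heat t g x)| ≤ C := by
  obtain ⟨M, -, hM⟩ := f.exists_abs_le
  obtain ⟨N, -, hN⟩ := g.exists_abs_le
  obtain ⟨C, hC⟩ := (isCompact_Icc.prod isCompact_Icc :
    IsCompact (Set.Icc (-M) M ×ˢ Set.Icc (-N) N)).exists_bound_of_continuousOn hΦ.continuousOn
  exact ⟨C, fun t x => hC (_, _) ⟨abs_le.1 (abs_heat_le hM t x), abs_le.1 (abs_heat_le hN t x)⟩⟩

lemma continuous_comp_heat {Φ : ℝ → ℝ → ℝ} (hΦ : Continuous fun p : ℝ × ℝ => Φ p.1 p.2)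
    (f g : 𝓢(E, ℝ)) : Continuous fun p : ℝ × E => Φ (heat p.1 f p.2) (heat p.1 g p.2) :=
  hΦ.comp ((continuous_heat f).prodMk (continuous_heat g))

variable (E) in
/-- Lebesgue measure on the space-time slab `(0, T] × E`. -/
abbrev slab (T : ℝ) : Measure (ℝ × E) := (volume.restrict (Set.Ioc 0 T)).prod volume

lemma integrable_heat_slab (f : 𝓢(E, ℝ)) (T : ℝ) :
    Integrable (fun p : ℝ × E => heat p.1 f p.2) (slab E T) := by
  have hm := (continuous_heat f).aestronglyMeasurable (μ := slab E T)
  rw [integrable_prod_iff hm]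
  refine ⟨Eventually.of_forall fun t => integrable_heat f t, ?_⟩
  refine (integrable_const (∫ x, |f x|)).mono' hm.norm.integral_prod_right'
    (Eventually.of_forall fun t => ?_)
  rw [norm_of_nonneg (integral_nonneg fun x => norm_nonneg _)]
  exact integral_abs_heat_le f t

lemma integrable_comp_heat_mul_heat_slab {Φ : ℝ → ℝ → ℝ}
    (hΦ : Continuous fun p : ℝ × ℝ => Φ p.1 p.2) (f g h : 𝓢(E, ℝ)) (T : ℝ) :
    Integrable (fun p : ℝ × E => Φ (heat p.1 f p.2) (heat p.1 g p.2) * heat p.1 h p.2)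
      (slab E T) := by
  obtain ⟨C, hC⟩ := exists_abs_comp_heat_le hΦ f g
  exact (integrable_heat_slab h T).bdd_mul (continuous_comp_heat hΦ f g).aestronglyMeasurable
    (Eventually.of_forall fun p => hC p.1 p.2)

lemma integrable_comp_heat_mul_heat {Φ : ℝ → ℝ → ℝ}
    (hΦ : Continuous fun p : ℝ × ℝ => Φ p.1 p.2) (f g h : 𝓢(E, ℝ)) (t : ℝ) :
    Integrable (fun x => Φ (heat t f x) (heat t g x) * heat t h x) := by
  obtain ⟨C, hC⟩ := exists_abs_comp_heat_le hΦ f g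
  exact (integrable_heat h t).bdd_mul
    ((continuous_comp_heat hΦ f g).comp (by fun_prop : Continuous fun x : E => (t, x))
      ).aestronglyMeasurable (Eventually.of_forall fun x => hC t x)

lemma integrable_comp_heat_mul_heat_mul_heat {Φ : ℝ → ℝ → ℝ}
    (hΦ : Continuous fun p : ℝ × ℝ => Φ p.1 p.2) (f g h k : 𝓢(E, ℝ)) (t : ℝ) :
    Integrable (fun x => Φ (heat t f x) (heat t g x) * heat t k x * heat t h x) := by
  obtain ⟨M, -, hM⟩ := h.exists_abs_le
  exact (integrable_comp_heat_mul_heat hΦ f g k t).mul_bdd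
    ((continuous_heat h).comp (by fun_prop : Continuous fun x : E => (t, x))
      ).aestronglyMeasurable (Eventually.of_forall fun x => abs_heat_le hM t x)

lemma integrable_comp_heat_mul_heat_mul_heat_slab {Φ : ℝ → ℝ → ℝ}
    (hΦ : Continuous fun p : ℝ × ℝ => Φ p.1 p.2) (f g h k : 𝓢(E, ℝ)) (T : ℝ) :
    Integrable (fun p : ℝ × E => Φ (heat p.1 f p.2) (heat p.1 g p.2) *
      heat p.1 k p.2 * heat p.1 h p.2) (slab E T) := by
  obtain ⟨M, -, hM⟩ := h.exists_abs_le
  exact (integrable_comp_heat_mul_heat_slab hΦ f g k T).mul_bdd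
    (continuous_heat h).aestronglyMeasurable
    (Eventually.of_forall fun p => abs_heat_le hM p.1 p.2)

/-- Integration by parts for `Φ(P_t f, P_t g)` against a derivative of `P_t h`. -/
lemma integral_comp_heat_mul_heat_lineDeriv {Φ Φx Φy : ℝ → ℝ → ℝ} (hΦ : HasPartials Φ Φx Φy)
    (hx : Continuous fun p : ℝ × ℝ => Φx p.1 p.2) (hy : Continuous fun p : ℝ × ℝ => Φy p.1 p.2)
    (f g h : 𝓢(E, ℝ)) (t : ℝ) (v : E) :
    ∫ x, Φ (heat t f x) (heat t g x) * heat t (∂_{v} h : 𝓢(E, ℝ)) x =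
      -∫ x, (Φx (heat t f x) (heat t g x) * heat t (∂_{v} f : 𝓢(E, ℝ)) x * heat t h x +
        Φy (heat t f x) (heat t g x) * heat t (∂_{v} g : 𝓢(E, ℝ)) x * heat t h x) := by
  have h' := integral_bilinear_hasLineDerivAt_right_eq_neg_left_of_integrable
    (μ := (volume : Measure E)) (B := ContinuousLinearMap.mul ℝ ℝ) (v := v)
    (f := fun x => Φ (heat t f x) (heat t g x))
    (f' := fun x => Φx (heat t f x) (heat t g x) * heat t (∂_{v} f : 𝓢(E, ℝ)) x +
        Φy (heat t f x) (heat t g x) * heat t (∂_{v} g : 𝓢(E, ℝ)) x)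
    (g := heat t h) (g' := fun x => heat t (∂_{v} h : 𝓢(E, ℝ)) x)
    (by
      simp only [ContinuousLinearMap.mul_apply', add_mul]
      exact (integrable_comp_heat_mul_heat_mul_heat hx f g h _ t).add
        (integrable_comp_heat_mul_heat_mul_heat hy f g h _ t))
    (integrable_comp_heat_mul_heat hΦ.continuous f g _ t)
    (integrable_comp_heat_mul_heat hΦ.continuous f g h t)
    (fun x _ => by
      have := hΦ.chain (hasLineDerivAt_heat f t x v) (hasLineDerivAt_heat g t x v)
      simpa [HasLineDerivAt] using this)
    (fun x _ => hasLineDerivAt_heat h t x v)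
  simpa only [ContinuousLinearMap.mul_apply', add_mul] using h'

/-- Data of a twice continuously differentiable function on `ℝ²`. -/
structure HasHessian (B Bx By Bxx Bxy Byy : ℝ → ℝ → ℝ) : Prop where
  base : HasPartials B Bx By
  fst : HasPartials Bx Bxx Bxy
  snd : HasPartials By Bxy Byy
  continuous_xx : Continuous fun p : ℝ × ℝ => Bxx p.1 p.2
  continuous_xy : Continuous fun p : ℝ × ℝ => Bxy p.1 p.2
  continuous_yy : Continuous fun p : ℝ × ℝ => Byy p.1 p.2

/-- The quadratic form of the Hessian of `B` at `(P_t f, P_t g)`, evaluated at the derivatives of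
`(P_t f, P_t g)` in the direction `v`. -/
def hessForm (Bxx Bxy Byy : ℝ → ℝ → ℝ) (f g : 𝓢(E, ℝ)) (v : E) (p : ℝ × E) : ℝ :=
  Bxx (heat p.1 f p.2) (heat p.1 g p.2) * heat p.1 (∂_{v} f : 𝓢(E, ℝ)) p.2 *
      heat p.1 (∂_{v} f : 𝓢(E, ℝ)) p.2 +
    Bxy (heat p.1 f p.2) (heat p.1 g p.2) * heat p.1 (∂_{v} g : 𝓢(E, ℝ)) p.2 *
      heat p.1 (∂_{v} f : 𝓢(E, ℝ)) p.2 +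
    (Bxy (heat p.1 f p.2) (heat p.1 g p.2) * heat p.1 (∂_{v} f : 𝓢(E, ℝ)) p.2 *
      heat p.1 (∂_{v} g : 𝓢(E, ℝ)) p.2 +
    Byy (heat p.1 f p.2) (heat p.1 g p.2) * heat p.1 (∂_{v} g : 𝓢(E, ℝ)) p.2 *
      heat p.1 (∂_{v} g : 𝓢(E, ℝ)) p.2)

variable {B Bx By Bxx Bxy Byy : ℝ → ℝ → ℝ}

lemma HasHessian.integrable_hessForm (hB : HasHessian B Bx By Bxx Bxy Byy) (f g : 𝓢(E, ℝ)) (v : E)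
    (T : ℝ) : Integrable (hessForm Bxx Bxy Byy f g v) (slab E T) :=
  ((integrable_comp_heat_mul_heat_mul_heat_slab hB.continuous_xx f g _ _ T).add
    (integrable_comp_heat_mul_heat_mul_heat_slab hB.continuous_xy f g _ _ T)).add
  ((integrable_comp_heat_mul_heat_mul_heat_slab hB.continuous_xy f g _ _ T).add
    (integrable_comp_heat_mul_heat_mul_heat_slab hB.continuous_yy f g _ _ T))

lemma HasHessian.integral_hessForm_slice (hB : HasHessian B Bx By Bxx Bxy Byy) (f g : 𝓢(E, ℝ))
    (v : E) (t : ℝ) :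
    ∫ x, (Bx (heat t f x) (heat t g x) * heat t (∂_{v} (∂_{v} f : 𝓢(E, ℝ)) : 𝓢(E, ℝ)) x +
      By (heat t f x) (heat t g x) * heat t (∂_{v} (∂_{v} g : 𝓢(E, ℝ)) : 𝓢(E, ℝ)) x) =
      -∫ x, hessForm Bxx Bxy Byy f g v (t, x) := by
  rw [integral_add (integrable_comp_heat_mul_heat hB.fst.continuous f g _ t)
    (integrable_comp_heat_mul_heat hB.snd.continuous f g _ t),
    integral_comp_heat_mul_heat_lineDeriv hB.fst hB.continuous_xx hB.continuous_xy,
    integral_comp_heat_mul_heat_lineDeriv hB.snd hB.continuous_xy hB.continuous_yy, ← neg_add,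
    ← integral_add]
  · rfl
  · exact (integrable_comp_heat_mul_heat_mul_heat hB.continuous_xx f g _ _ t).add
      (integrable_comp_heat_mul_heat_mul_heat hB.continuous_xy f g _ _ t)
  · exact (integrable_comp_heat_mul_heat_mul_heat hB.continuous_xy f g _ _ t).add
      (integrable_comp_heat_mul_heat_mul_heat hB.continuous_yy f g _ _ t)

/-- Energy identity for `∫ B(P_t f, P_t g)` along the heat flow. -/
lemma HasHessian.integral_flow {ι : Type*} [Fintype ι] (b : OrthonormalBasis ι ℝ E)
    (hB : HasHessian B Bx By Bxx Bxy Byy) (f g : 𝓢(E, ℝ)) {T : ℝ} (hT : 0 ≤ T) :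
    Integrable (fun x => B (f x) (g x) - B (heat T f x) (heat T g x)) ∧
    ∫ p, ∑ k, hessForm Bxx Bxy Byy f g (b k) p ∂(slab E T) =
      2 * ∫ x, (B (f x) (g x) - B (heat T f x) (heat T g x)) := by
  set w : ι → ℝ × E → ℝ := fun k p =>
    Bx (heat p.1 f p.2) (heat p.1 g p.2) *
      heat p.1 (∂_{b k} (∂_{b k} f : 𝓢(E, ℝ)) : 𝓢(E, ℝ)) p.2 +
    By (heat p.1 f p.2) (heat p.1 g p.2) *
      heat p.1 (∂_{b k} (∂_{b k} g : 𝓢(E, ℝ)) : 𝓢(E, ℝ)) p.2 with hw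
  have hwc : ∀ k, Continuous (w k) := fun k =>
    ((continuous_comp_heat hB.fst.continuous f g).mul (continuous_heat _)).add
    ((continuous_comp_heat hB.snd.continuous f g).mul (continuous_heat _))
  have hwi : ∀ k, Integrable (w k) (slab E T) := fun k =>
    (integrable_comp_heat_mul_heat_slab hB.fst.continuous f g _ T).add
    (integrable_comp_heat_mul_heat_slab hB.snd.continuous f g _ T)
  have hsi : Integrable (fun p => ∑ k, w k p) (slab E T) := integrable_finsetSum _ fun k _ => hwi k
  have hsc : Continuous (fun p => ∑ k, w k p) := continuous_finsetSum _ fun k _ => hwc k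
  have ftc : ∀ x, B (f x) (g x) - B (heat T f x) (heat T g x) =
      -(1 / 2) * ∫ t in Set.Ioc 0 T, ∑ k, w k (t, x) := by
    intro x
    have hd := intervalIntegral.integral_eq_sub_of_hasDerivAt_of_le hT
      (f := fun t => B (heat t f x) (heat t g x)) (f' := fun t => 1 / 2 * ∑ k, w k (t, x))
      ((continuous_comp_heat hB.base.continuous f g).comp
        (by fun_prop : Continuous fun t : ℝ => (t, x))).continuousOn
      (fun t ht => by
        refine (hB.base.chain (hasDerivAt_heat b f ht.1 x)
          (hasDerivAt_heat b g ht.1 x)).congr_deriv ?_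
        simp only [hw, Finset.sum_add_distrib, ← Finset.mul_sum]
        ring)
      (Continuous.intervalIntegrable (by fun_prop) _ _)
    rw [intervalIntegral.integral_of_le hT, integral_const_mul] at hd
    simp only [heat_zero] at hd
    linarith
  have swap : ∫ x, ∫ t in Set.Ioc 0 T, ∑ k, w k (t, x) = ∫ p, ∑ k, w k p ∂(slab E T) := by
    rw [integral_prod _ hsi]
    exact (integral_integral_swap hsi).symm
  constructor
  · simp only [ftc]
    exact hsi.integral_prod_right.const_mul _
  · simp only [ftc, integral_const_mul, swap]
    have hk : ∀ k, ∫ p, w k p ∂(slab E T) = -∫ p, hessForm Bxx Bxy Byy f g (b k) p ∂(slab E T) := by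
      intro k
      rw [integral_prod _ (hwi k), integral_prod _ (hB.integrable_hessForm f g (b k) T),
        ← integral_neg]
      exact integral_congr_ae (Eventually.of_forall fun t =>
        hB.integral_hessForm_slice f g (b k) t)
    rw [integral_finsetSum _ fun k _ => hwi k,
      integral_finsetSum _ fun k _ => hB.integrable_hessForm f g (b k) T]
    simp only [hk, Finset.sum_neg_distrib]
    ring

end Flow

section Bellman

lemma HasPartials.fst' : HasPartials (fun x _ => x) (fun _ _ => 1) (fun _ _ => 0) :=
  ⟨by fun_prop, fun hu _ => by simpa using hu⟩

lemma HasPartials.snd' : HasPartials (fun _ y => y) (fun _ _ => 0) (fun _ _ => 1) :=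
  ⟨by fun_prop, fun _ hv => by simpa using hv⟩

lemma HasPartials.const (a : ℝ) : HasPartials (fun _ _ => a) (fun _ _ => 0) (fun _ _ => 0) :=
  ⟨by fun_prop, fun {_ _ _ _ s} _ _ => by simpa using hasDerivAt_const s a⟩

variable {Φ Φx Φy Ψ Ψx Ψy Φx' Φy' : ℝ → ℝ → ℝ}

lemma HasPartials.add (h : HasPartials Φ Φx Φy) (k : HasPartials Ψ Ψx Ψy) :
    HasPartials (fun x y => Φ x y + Ψ x y) (fun x y => Φx x y + Ψx x y)
      (fun x y => Φy x y + Ψy x y) :=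
  ⟨h.continuous.add k.continuous, fun hu hv =>
    ((h.chain hu hv).add (k.chain hu hv)).congr_deriv (by ring)⟩

lemma HasPartials.mul (h : HasPartials Φ Φx Φy) (k : HasPartials Ψ Ψx Ψy) :
    HasPartials (fun x y => Φ x y * Ψ x y) (fun x y => Φx x y * Ψ x y + Φ x y * Ψx x y)
      (fun x y => Φy x y * Ψ x y + Φ x y * Ψy x y) :=
  ⟨h.continuous.mul k.continuous, fun hu hv =>
    ((h.chain hu hv).mul (k.chain hu hv)).congr_deriv (by ring)⟩

lemma HasPartials.rpow (h : HasPartials Φ Φx Φy) (hpos : ∀ x y, 0 < Φ x y) (r : ℝ) :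
    HasPartials (fun x y => Φ x y ^ r) (fun x y => r * Φ x y ^ (r - 1) * Φx x y)
      (fun x y => r * Φ x y ^ (r - 1) * Φy x y) :=
  ⟨h.continuous.rpow_const fun p => Or.inl (hpos _ _).ne', fun hu hv =>
    ((h.chain hu hv).rpow_const (Or.inl (hpos _ _).ne')).congr_deriv (by ring)⟩

lemma HasPartials.congr (h : HasPartials Φ Φx Φy) (hx : ∀ x y, Φx x y = Φx' x y)
    (hy : ∀ x y, Φy x y = Φy' x y) : HasPartials Φ Φx' Φy' :=
  ⟨h.continuous, fun hu hv => (h.chain hu hv).congr_deriv (by rw [hx, hy])⟩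

/-- A regularized Bellman function: `K |y|^q + x² (|x|^p + |y|^q)^(1 - 2/p)` with `x²` and `y²`
replaced by `x² + e` and `y² + e` inside the non-smooth powers. -/
def bellman (p q K e x y : ℝ) : ℝ :=
  K * (y ^ 2 + e) ^ (q / 2) + x ^ 2 * ((x ^ 2 + e) ^ (p / 2) + (y ^ 2 + e) ^ (q / 2)) ^ (1 - 2 / p)

/-- The factor in front of `|y|^q` in the Bellman function. -/
def bellmanConst (q : ℝ) : ℝ := (5 * q ^ 2 + 1) / (q * (q - 1))

/-- The algebraic core of the convexity of the Bellman function. -/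
lemma bellman_hessian_bounds {p q θ x y X Y α γ σ S : ℝ} (hp : 2 ≤ p) (hq : 1 < q)
    (hθ0 : 0 ≤ θ) (hθ1 : θ ≤ 1) (hθ : (1 - θ) * p = 2) (hX : x ^ 2 ≤ X) (hY : y ^ 2 ≤ Y)
    (hY0 : 0 < Y) (hα : 0 < α) (hγ : 0 < γ) (hσ : 0 < σ)
    (hS : S = α * X ^ 2 + γ * Y ^ 2) (hXS : X * σ * S ≤ 1) :
    2 * (σ * S ^ 2) ≤ 2 * (σ * S ^ 2) + 4 * x * (θ * σ * S * (p * x * α * X)) +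
        x ^ 2 * (θ * σ * S * (p * α * X + p * (p - 2) * x ^ 2 * α) +
          θ * (θ - 1) * σ * (p * x * α * X) ^ 2) ∧
    (2 * x * (θ * σ * S * (q * y * γ * Y)) +
        x ^ 2 * (θ * (θ - 1) * σ * (p * x * α * X) * (q * y * γ * Y))) ^ 2 ≤
      4 * q ^ 2 * (σ * S ^ 2) * (γ * Y) ∧
    -(q ^ 2 * (γ * Y)) ≤ x ^ 2 * (θ * σ * S * (q * γ * Y + q * (q - 2) * y ^ 2 * γ) +
        θ * (θ - 1) * σ * (q * y * γ * Y) ^ 2) := by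
  have hX0 : 0 ≤ X := (sq_nonneg x).trans hX
  have hS1 : α * X ^ 2 ≤ S := by rw [hS]; nlinarith [mul_pos hγ (pow_pos hY0 2)]
  have hS2 : γ * Y ^ 2 ≤ S := by rw [hS]; nlinarith [mul_nonneg hα.le (sq_nonneg X)]
  have hS0 : 0 < S := (mul_pos hγ (pow_pos hY0 2)).trans_le hS2
  have hone : X * σ * (γ * Y ^ 2) ≤ 1 :=
    (mul_le_mul_of_nonneg_left hS2 (by positivity)).trans hXS
  have hxaX : x ^ 2 * α * X ≤ S := by
    refine le_trans ?_ hS1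
    calc x ^ 2 * α * X ≤ X * α * X := by gcongr
      _ = α * X ^ 2 := by ring
  refine ⟨?_, ?_, ?_⟩
  · have e1 : 4 * x * (θ * σ * S * (p * x * α * X)) +
        x ^ 2 * (θ * σ * S * (p * α * X + p * (p - 2) * x ^ 2 * α) +
          θ * (θ - 1) * σ * (p * x * α * X) ^ 2) =
        θ * σ * p * α * x ^ 2 * (2 * S * X + 2 * X * (S - x ^ 2 * α * X) + S * X +
          (p - 2) * S * x ^ 2) := by
      linear_combination (-θ * σ * p * α ^ 2 * x ^ 4 * X ^ 2) * hθ
    have h1 : 0 ≤ S - x ^ 2 * α * X := by linarith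
    have h2 : 0 ≤ p - 2 := by linarith
    have : 0 ≤ θ * σ * p * α * x ^ 2 * (2 * S * X + 2 * X * (S - x ^ 2 * α * X) + S * X +
          (p - 2) * S * x ^ 2) := by positivity
    linarith
  · have e2 : 2 * x * (θ * σ * S * (q * y * γ * Y)) +
        x ^ 2 * (θ * (θ - 1) * σ * (p * x * α * X) * (q * y * γ * Y)) =
        2 * θ * σ * q * x * y * γ * Y * (S - x ^ 2 * α * X) := by
      linear_combination (-θ * σ * q * x ^ 3 * y * γ * Y * α * X) * hθ
    have h1 : 0 ≤ S - x ^ 2 * α * X := by linarith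
    have h3 : S - x ^ 2 * α * X ≤ S := by have : 0 ≤ x ^ 2 * α * X := by positivity
                                          linarith
    rw [e2]
    calc (2 * θ * σ * q * x * y * γ * Y * (S - x ^ 2 * α * X)) ^ 2
        = 4 * q ^ 2 * σ * γ * Y * (θ ^ 2 * x ^ 2 * σ * γ * y ^ 2 * Y) *
            (S - x ^ 2 * α * X) ^ 2 := by ring
      _ ≤ 4 * q ^ 2 * σ * γ * Y * (1 ^ 2 * X * σ * γ * Y * Y) * S ^ 2 := by gcongr
      _ = 4 * q ^ 2 * σ * γ * Y * (X * σ * (γ * Y ^ 2)) * S ^ 2 := by ring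
      _ ≤ 4 * q ^ 2 * σ * γ * Y * 1 * S ^ 2 := by gcongr
      _ = _ := by ring
  · have h1 : 0 ≤ q * γ * Y + q * (q - 2) * y ^ 2 * γ := by
      have : 0 ≤ q * γ * ((q - 1) * Y + (2 - q) * (Y - y ^ 2)) ∨ 2 ≤ q := by
        rcases le_total q 2 with h | h
        · left
          have a1 : 0 ≤ q - 1 := by linarith
          have a2 : 0 ≤ 2 - q := by linarith
          have a3 : 0 ≤ Y - y ^ 2 := by linarith
          positivity
        · exact Or.inr h
      rcases this with h | h
      · linarith
      · have : 0 ≤ q - 2 := by linarith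
        positivity
    have h2 : x ^ 2 * (θ * (1 - θ) * σ * (q * y * γ * Y) ^ 2) ≤ q ^ 2 * (γ * Y) := by
      have t1 : θ * (1 - θ) ≤ 1 := by nlinarith
      have t0 : 0 ≤ θ * (1 - θ) := mul_nonneg hθ0 (by linarith)
      calc x ^ 2 * (θ * (1 - θ) * σ * (q * y * γ * Y) ^ 2)
          = x ^ 2 * (θ * (1 - θ)) * σ * q ^ 2 * y ^ 2 * γ ^ 2 * Y ^ 2 := by ring
        _ ≤ X * 1 * σ * q ^ 2 * Y * γ ^ 2 * Y ^ 2 := by gcongr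
        _ = q ^ 2 * (γ * Y) * (X * σ * (γ * Y ^ 2)) := by ring
        _ ≤ q ^ 2 * (γ * Y) * 1 := by gcongr
        _ = _ := by ring
    have h4 : 0 ≤ x ^ 2 * (θ * σ * S * (q * γ * Y + q * (q - 2) * y ^ 2 * γ)) := by positivity
    linarith

lemma add_le_quadratic_form {a b c D F K : ℝ} (hD : 0 < D) (ha : 2 * D ≤ a)
    (hb : b ^ 2 ≤ K * D * F) (hc : (K + 1) * F ≤ c) (ξ η : ℝ) :
    D * ξ ^ 2 + F * η ^ 2 ≤ a * ξ ^ 2 + 2 * b * ξ * η + c * η ^ 2 := by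
  have h1 : 0 ≤ (D * ξ + b * η) ^ 2 / D := by positivity
  have h2 : (D * ξ + b * η) ^ 2 / D = D * ξ ^ 2 + 2 * b * ξ * η + b ^ 2 / D * η ^ 2 := by
    field_simp; ring
  have h3 : b ^ 2 / D ≤ K * F := by rw [div_le_iff₀ hD]; linarith
  nlinarith [sq_nonneg ξ, sq_nonneg η, mul_le_mul_of_nonneg_right h3 (sq_nonneg η),
    mul_le_mul_of_nonneg_right hc (sq_nonneg η), mul_le_mul_of_nonneg_right ha (sq_nonneg ξ)]

lemma exists_hasHessian_bellman {p q e : ℝ} (hp : 2 ≤ p) (hpq : p.HolderConjugate q) (he : 0 < e) :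
    ∃ Bx By Bxx Bxy Byy : ℝ → ℝ → ℝ,
      HasHessian (bellman p q (bellmanConst q) e) Bx By Bxx Bxy Byy ∧
      ∀ x y, ∃ D F : ℝ, 0 < D ∧ 0 < F ∧ 1 ≤ D * F ∧ ∀ ξ η,
        D * ξ ^ 2 + F * η ^ 2 ≤ Bxx x y * ξ ^ 2 + 2 * Bxy x y * ξ * η + Byy x y * η ^ 2 := by
  have hq : 1 < q := hpq.symm.lt
  have hp0 : 0 < p := by linarith
  set K := bellmanConst q with hK
  set θ := 1 - 2 / p with hθd
  have hθ0 : 0 ≤ θ := by rw [hθd, sub_nonneg, div_le_one hp0]; exact hp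
  have hθ1 : θ ≤ 1 := by rw [hθd]; have : 0 < 2 / p := by positivity
                         linarith
  have hθ : (1 - θ) * p = 2 := by rw [hθd]; field_simp; ring
  have hθq : q * (1 + θ) = 2 := by
    have h := hpq.mul_eq_add
    rw [hθd]; field_simp; linear_combination 2 * h
  obtain ⟨X, hX⟩ : ∃ X : ℝ → ℝ → ℝ, X = fun x _ => x * x + e := ⟨_, rfl⟩
  obtain ⟨Y, hY⟩ : ∃ Y : ℝ → ℝ → ℝ, Y = fun _ y => y * y + e := ⟨_, rfl⟩
  have hXpos : ∀ x y : ℝ, 0 < X x y := fun x y => by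
    have := mul_self_nonneg x; simp only [hX]; linarith
  have hYpos : ∀ x y : ℝ, 0 < Y x y := fun x y => by
    have := mul_self_nonneg y; simp only [hY]; linarith
  have pX : HasPartials X (fun x _ => 2 * x) (fun _ _ => 0) := by
    rw [hX]
    exact ((HasPartials.fst'.mul HasPartials.fst').add (HasPartials.const e)).congr
      (fun x y => by ring) (fun x y => by ring)
  have pY : HasPartials Y (fun _ _ => 0) (fun _ y => 2 * y) := by
    rw [hY]
    exact ((HasPartials.snd'.mul HasPartials.snd').add (HasPartials.const e)).congr
      (fun x y => by ring) (fun x y => by ring)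
  obtain ⟨A, hA⟩ : ∃ A : ℝ → ℝ → ℝ, A = fun x y => X x y ^ (p / 2 - 2) := ⟨_, rfl⟩
  obtain ⟨C, hC⟩ : ∃ C : ℝ → ℝ → ℝ, C = fun x y => Y x y ^ (q / 2 - 2) := ⟨_, rfl⟩
  have hApos : ∀ x y, 0 < A x y := fun x y => by rw [hA]; exact rpow_pos_of_pos (hXpos x y) _
  have hCpos : ∀ x y, 0 < C x y := fun x y => by rw [hC]; exact rpow_pos_of_pos (hYpos x y) _
  have cA : Continuous fun z : ℝ × ℝ => A z.1 z.2 := by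
    rw [hA]; exact (pX.rpow hXpos _).continuous
  have cC : Continuous fun z : ℝ × ℝ => C z.1 z.2 := by
    rw [hC]; exact (pY.rpow hYpos _).continuous
  have rpow_split : ∀ {z r : ℝ}, 0 < z →
      z ^ (r - 1) = z ^ (r - 2) * z ∧ z ^ r = z ^ (r - 2) * z ^ 2 := by
    intro z r hz
    refine ⟨?_, ?_⟩
    · rw [← rpow_add_one hz.ne']; ring_nf
    · rw [← rpow_add_natCast hz.ne']; norm_num
  have pA1 : HasPartials (fun x y => A x y * X x y)
      (fun x y => (p - 2) * x * A x y) (fun _ _ => 0) := by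
    have h := pX.rpow hXpos (p / 2 - 1)
    have e1 : (fun x y => X x y ^ (p / 2 - 1)) = fun x y => A x y * X x y := by
      funext x y; rw [hA]; exact (rpow_split (hXpos x y)).1
    rw [e1] at h
    refine h.congr (fun x y => ?_) (fun x y => by ring)
    rw [hA, show p / 2 - 1 - 1 = p / 2 - 2 by ring]; ring
  have pA : HasPartials (fun x y => A x y * X x y ^ 2)
      (fun x y => p * x * A x y * X x y) (fun _ _ => 0) := by
    have h := pX.rpow hXpos (p / 2)
    have e1 : (fun x y => X x y ^ (p / 2)) = fun x y => A x y * X x y ^ 2 := by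
      funext x y; rw [hA]; exact (rpow_split (hXpos x y)).2
    rw [e1] at h
    refine h.congr (fun x y => ?_) (fun x y => by ring)
    rw [(rpow_split (hXpos x y)).1, hA]; ring
  have pC1 : HasPartials (fun x y => C x y * Y x y) (fun _ _ => 0)
      (fun x y => (q - 2) * y * C x y) := by
    have h := pY.rpow hYpos (q / 2 - 1)
    have e1 : (fun x y => Y x y ^ (q / 2 - 1)) = fun x y => C x y * Y x y := by
      funext x y; rw [hC]; exact (rpow_split (hYpos x y)).1
    rw [e1] at h
    refine h.congr (fun x y => by ring) (fun x y => ?_)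
    rw [hC, show q / 2 - 1 - 1 = q / 2 - 2 by ring]; ring
  have pC : HasPartials (fun x y => C x y * Y x y ^ 2) (fun _ _ => 0)
      (fun x y => q * y * C x y * Y x y) := by
    have h := pY.rpow hYpos (q / 2)
    have e1 : (fun x y => Y x y ^ (q / 2)) = fun x y => C x y * Y x y ^ 2 := by
      funext x y; rw [hC]; exact (rpow_split (hYpos x y)).2
    rw [e1] at h
    refine h.congr (fun x y => by ring) (fun x y => ?_)
    rw [(rpow_split (hYpos x y)).1, hC]; ring
  obtain ⟨S, hS⟩ : ∃ S : ℝ → ℝ → ℝ, S = fun x y => A x y * X x y ^ 2 + C x y * Y x y ^ 2 :=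
    ⟨_, rfl⟩
  have hSA : ∀ x y, A x y * X x y ^ 2 < S x y := fun x y => by
    have := mul_pos (hCpos x y) (pow_pos (hYpos x y) 2)
    rw [hS]; simp only; linarith
  have hSC : ∀ x y, C x y * Y x y ^ 2 < S x y := fun x y => by
    have := mul_pos (hApos x y) (pow_pos (hXpos x y) 2)
    rw [hS]; simp only; linarith
  have hSpos : ∀ x y, 0 < S x y := fun x y =>
    (mul_pos (hApos x y) (pow_pos (hXpos x y) 2)).trans (hSA x y)
  have pS : HasPartials S (fun x y => p * x * A x y * X x y)
      (fun x y => q * y * C x y * Y x y) := by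
    rw [hS]
    exact (pA.add pC).congr (fun x y => by ring) (fun x y => by ring)
  obtain ⟨G, hG⟩ : ∃ G : ℝ → ℝ → ℝ, G = fun x y => S x y ^ (θ - 2) := ⟨_, rfl⟩
  have hGpos : ∀ x y, 0 < G x y := fun x y => by rw [hG]; exact rpow_pos_of_pos (hSpos x y) _
  have cG : Continuous fun z : ℝ × ℝ => G z.1 z.2 := by
    rw [hG]; exact (pS.rpow hSpos _).continuous
  have pG1 : HasPartials (fun x y => G x y * S x y)
      (fun x y => (θ - 1) * G x y * (p * x * A x y * X x y))
      (fun x y => (θ - 1) * G x y * (q * y * C x y * Y x y)) := by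
    have h := pS.rpow hSpos (θ - 1)
    have e1 : (fun x y => S x y ^ (θ - 1)) = fun x y => G x y * S x y := by
      funext x y; rw [hG]; exact (rpow_split (hSpos x y)).1
    rw [e1] at h
    refine h.congr (fun x y => ?_) (fun x y => ?_) <;>
      rw [hG, show θ - 1 - 1 = θ - 2 by ring]
  have pG : HasPartials (fun x y => G x y * S x y ^ 2)
      (fun x y => θ * (G x y * S x y) * (p * x * A x y * X x y))
      (fun x y => θ * (G x y * S x y) * (q * y * C x y * Y x y)) := by
    have h := pS.rpow hSpos θ
    have e1 : (fun x y => S x y ^ θ) = fun x y => G x y * S x y ^ 2 := by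
      funext x y; rw [hG]; exact (rpow_split (hSpos x y)).2
    rw [e1] at h
    refine h.congr (fun x y => ?_) (fun x y => ?_) <;>
      rw [(rpow_split (hSpos x y)).1, hG]
  have pSx : HasPartials (fun x y => p * x * A x y * X x y)
      (fun x y => p * A x y * X x y + p * (p - 2) * x ^ 2 * A x y) (fun _ _ => 0) := by
    have h := ((HasPartials.const p).mul HasPartials.fst').mul pA1
    simp only [← mul_assoc] at h
    exact h.congr (fun x y => by ring) (fun x y => by ring)
  have pSy : HasPartials (fun x y => q * y * C x y * Y x y) (fun _ _ => 0)
      (fun x y => q * C x y * Y x y + q * (q - 2) * y ^ 2 * C x y) := by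
    have h := ((HasPartials.const q).mul HasPartials.snd').mul pC1
    simp only [← mul_assoc] at h
    exact h.congr (fun x y => by ring) (fun x y => by ring)
  have pGx := ((HasPartials.const θ).mul pG1).mul pSx
  have pGy := ((HasPartials.const θ).mul pG1).mul pSy
  have px2 : HasPartials (fun x _ => x ^ 2) (fun x _ => 2 * x) (fun _ _ => 0) := by
    have h := HasPartials.fst'.mul HasPartials.fst'
    simp only [← pow_two] at h
    exact h.congr (fun x y => by ring) (fun x y => by ring)
  have p2x : HasPartials (fun x _ => 2 * x) (fun _ _ => 2) (fun _ _ => 0) :=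
    ((HasPartials.const 2).mul HasPartials.fst').congr (fun x y => by ring) (fun x y => by ring)
  have cX := pX.continuous
  have cY := pY.continuous
  have cS := pS.continuous
  have eB : bellman p q K e = fun x y => K * (C x y * Y x y ^ 2) + x ^ 2 * (G x y * S x y ^ 2) := by
    funext x y
    rw [bellman, ← hθd, hG]
    simp only
    rw [← (rpow_split (hSpos x y)).2, hC]
    simp only
    rw [← (rpow_split (hYpos x y)).2, hS]
    simp only
    rw [hA, hC]
    simp only
    rw [← (rpow_split (hYpos x y)).2, ← (rpow_split (hXpos x y)).2, hX, hY]
    simp only [pow_two]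
  refine ⟨fun x y => 2 * x * (G x y * S x y ^ 2) +
      x ^ 2 * (θ * (G x y * S x y) * (p * x * A x y * X x y)),
    fun x y => K * (q * y * C x y * Y x y) +
      x ^ 2 * (θ * (G x y * S x y) * (q * y * C x y * Y x y)),
    fun x y => 2 * (G x y * S x y ^ 2) + 4 * x * (θ * G x y * S x y * (p * x * A x y * X x y)) +
      x ^ 2 * (θ * G x y * S x y * (p * A x y * X x y + p * (p - 2) * x ^ 2 * A x y) +
        θ * (θ - 1) * G x y * (p * x * A x y * X x y) ^ 2),
    fun x y => 2 * x * (θ * G x y * S x y * (q * y * C x y * Y x y)) +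
      x ^ 2 * (θ * (θ - 1) * G x y * (p * x * A x y * X x y) * (q * y * C x y * Y x y)),
    fun x y => K * (q * C x y * Y x y + q * (q - 2) * y ^ 2 * C x y) +
      x ^ 2 * (θ * G x y * S x y * (q * C x y * Y x y + q * (q - 2) * y ^ 2 * C x y) +
        θ * (θ - 1) * G x y * (q * y * C x y * Y x y) ^ 2),
    ⟨?_, ?_, ?_, by fun_prop, by fun_prop, by fun_prop⟩, fun x y => ?_⟩
  · rw [eB]
    exact (((HasPartials.const K).mul pC).add (px2.mul pG)).congr (fun x y => by ring)
      (fun x y => by ring)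
  · exact ((p2x.mul pG).add (px2.mul pGx)).congr (fun x y => by ring) (fun x y => by ring)
  · exact (((HasPartials.const K).mul pSy).add (px2.mul pGy)).congr (fun x y => by ring)
      (fun x y => by ring)
  · have hX2 : x ^ 2 ≤ X x y := by rw [hX]; simp only; nlinarith
    have hY2 : y ^ 2 ≤ Y x y := by rw [hY]; simp only; nlinarith
    have hXS : X x y * G x y * S x y ≤ 1 := by
      have e1 : G x y * S x y = (S x y ^ (1 - θ))⁻¹ := by
        rw [hG, ← rpow_neg (hSpos x y).le, neg_sub]
        exact (rpow_split (hSpos x y)).1.symm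
      have e2 : X x y ≤ S x y ^ (1 - θ) := by
        calc X x y = (X x y ^ (p / 2)) ^ (1 - θ) := by
              rw [← rpow_mul (hXpos x y).le, show p / 2 * (1 - θ) = 1 by linarith, rpow_one]
          _ ≤ S x y ^ (1 - θ) := by
              refine rpow_le_rpow (rpow_nonneg (hXpos x y).le _) ?_ (by linarith)
              rw [(rpow_split (hXpos x y)).2]
              have := hSA x y
              rw [hA] at this
              exact this.le
      rw [mul_assoc, e1, ← div_eq_mul_inv, div_le_one (rpow_pos_of_pos (hSpos x y) _)]
      exact e2
    have hDF : 1 ≤ G x y * S x y ^ 2 * (C x y * Y x y) := by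
      have e1 : G x y * S x y ^ 2 = S x y ^ θ := by rw [hG]; exact (rpow_split (hSpos x y)).2.symm
      have e2 : C x y * Y x y = Y x y ^ (q / 2 - 1) := by
        rw [hC]; exact (rpow_split (hYpos x y)).1.symm
      calc (1 : ℝ) = (Y x y ^ (q / 2)) ^ θ * Y x y ^ (q / 2 - 1) := by
            rw [← rpow_mul (hYpos x y).le, ← rpow_add (hYpos x y),
              show q / 2 * θ + (q / 2 - 1) = 0 by linarith, rpow_zero]
        _ ≤ S x y ^ θ * Y x y ^ (q / 2 - 1) := by
            have h := hSC x y
            rw [hC] at h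
            rw [(rpow_split (hYpos x y)).2]
            exact mul_le_mul_of_nonneg_right (rpow_le_rpow (mul_nonneg
              (rpow_nonneg (hYpos x y).le _) (sq_nonneg _)) h.le hθ0)
              (rpow_nonneg (hYpos x y).le _)
        _ = _ := by rw [e1, e2]
    obtain ⟨h1, h2, h3⟩ := bellman_hessian_bounds hp hq hθ0 hθ1 hθ hX2 hY2 (hYpos x y)
      (hApos x y) (hCpos x y) (hGpos x y) (congrFun₂ hS x y) hXS
    have hDpos : 0 < G x y * S x y ^ 2 := mul_pos (hGpos x y) (pow_pos (hSpos x y) 2)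
    have hFpos : 0 < C x y * Y x y := mul_pos (hCpos x y) (hYpos x y)
    refine ⟨G x y * S x y ^ 2, C x y * Y x y, hDpos, hFpos, hDF, fun ξ η =>
      add_le_quadratic_form hDpos h1 h2 ?_ ξ η⟩
    have hq2 : q ≤ 2 := by nlinarith
    have hKpos : 0 < K := by
      have : 0 < q - 1 := by linarith
      rw [hK, bellmanConst]; positivity
    have hKq : K * (q * (q - 1)) = 5 * q ^ 2 + 1 := by
      have : q - 1 ≠ 0 := by linarith
      rw [hK, bellmanConst]; field_simp
    have h4 : q * (q - 1) * (C x y * Y x y) ≤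
        q * C x y * Y x y + q * (q - 2) * y ^ 2 * C x y := by
      have : 0 ≤ q * (2 - q) * C x y * (Y x y - y ^ 2) :=
        mul_nonneg (mul_nonneg (mul_nonneg (by linarith) (by linarith)) (hCpos x y).le)
          (by linarith)
      linarith
    have h5 := mul_le_mul_of_nonneg_left h4 hKpos.le
    have h6 : K * (q * (q - 1) * (C x y * Y x y)) = (5 * q ^ 2 + 1) * (C x y * Y x y) := by
      rw [← hKq]; ring
    linarith

end Bellman

section Bellman

variable {p q : ℝ}

lemma bellmanConst_pos (hq : 1 < q) : 0 < bellmanConst q := by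
  have : 0 < q - 1 := by linarith
  unfold bellmanConst; positivity

lemma bellman_zero_zero_le {K e : ℝ} (hK : 0 ≤ K) (hq : 0 ≤ q) (he : 0 ≤ e) (x y : ℝ) :
    bellman p q K e 0 0 ≤ bellman p q K e x y := by
  have h1 : (0 ^ 2 + e) ^ (q / 2) ≤ (y ^ 2 + e) ^ (q / 2) :=
    rpow_le_rpow (by positivity) (by linarith [sq_nonneg y]) (by positivity)
  have h2 : 0 ≤ x ^ 2 * ((x ^ 2 + e) ^ (p / 2) + (y ^ 2 + e) ^ (q / 2)) ^ (1 - 2 / p) := by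
    positivity
  have h3 := mul_le_mul_of_nonneg_left h1 hK
  unfold bellman
  linarith

lemma sq_rpow_half (y : ℝ) (r : ℝ) : (y ^ 2) ^ (r / 2) = |y| ^ r := by
  rw [← sq_abs, ← rpow_natCast, ← rpow_mul (abs_nonneg y)]
  congr 1; push_cast; ring

lemma bellman_sub_le {K e M N : ℝ} (hp : 2 ≤ p) (hK : 0 ≤ K) (hq : 0 ≤ q) (hq2 : q ≤ 2)
    (he : 0 ≤ e) (he1 : e ≤ 1) {x y : ℝ} (hx : |x| ≤ M) (hy : |y| ≤ N) :
    bellman p q K e x y - bellman p q K e 0 0 ≤ K * |y| ^ q +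
      ((M ^ 2 + 1) ^ (p / 2) + (N ^ 2 + 1) ^ (q / 2)) ^ (1 - 2 / p) * x ^ 2 := by
  have h1 : (y ^ 2 + e) ^ (q / 2) ≤ |y| ^ q + e ^ (q / 2) := by
    rw [← sq_rpow_half]
    exact rpow_add_le_add_rpow (sq_nonneg y) he (by positivity) (by linarith)
  have hxM : x ^ 2 ≤ M ^ 2 := sq_le_sq' (abs_le.1 hx).1 (abs_le.1 hx).2
  have hyN : y ^ 2 ≤ N ^ 2 := sq_le_sq' (abs_le.1 hy).1 (abs_le.1 hy).2
  have hθ : 0 ≤ 1 - 2 / p := by rw [sub_nonneg, div_le_one (by linarith)]; exact hp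
  have h2 : ((x ^ 2 + e) ^ (p / 2) + (y ^ 2 + e) ^ (q / 2)) ^ (1 - 2 / p) ≤
      ((M ^ 2 + 1) ^ (p / 2) + (N ^ 2 + 1) ^ (q / 2)) ^ (1 - 2 / p) := by gcongr
  have h3 := mul_le_mul_of_nonneg_left h1 hK
  have h4 := mul_le_mul_of_nonneg_right h2 (sq_nonneg x)
  simp only [bellman, ne_eq, OfNat.ofNat_ne_zero, not_false_eq_true, zero_pow, zero_add, zero_mul,
    add_zero]
  linarith

lemma bellman_limit_le {K : ℝ} (hp : 2 ≤ p) (hq : 0 < q) (x y : ℝ) :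
    bellman p q K 0 x y - bellman p q K 0 0 0 ≤ K * |y| ^ q + (|x| ^ p + |y| ^ q) := by
  have hp0 : p ≠ 0 := by linarith
  have h0 : bellman p q K 0 0 0 = 0 := by
    simp [bellman, zero_rpow (by positivity : q / 2 ≠ 0)]
  rw [h0, sub_zero]
  simp only [bellman, add_zero, sq_rpow_half]
  gcongr
  set S := |x| ^ p + |y| ^ q
  have hS : 0 ≤ S := by positivity
  have h1 : x ^ 2 ≤ S ^ (2 / p) := by
    calc x ^ 2 = (|x| ^ p) ^ (2 / p) := by
          rw [← rpow_mul (abs_nonneg x), mul_div_cancel₀ _ hp0]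
          norm_num
      _ ≤ S ^ (2 / p) := by
          refine rpow_le_rpow (by positivity) ?_ (by positivity)
          exact le_add_of_nonneg_right (by positivity)
  calc x ^ 2 * S ^ (1 - 2 / p) ≤ S ^ (2 / p) * S ^ (1 - 2 / p) := by gcongr
    _ = S := by rw [← rpow_add' hS (by norm_num)]; norm_num

lemma continuous_bellman_param {K : ℝ} (hp : 2 ≤ p) (hq : 0 ≤ q) (x y : ℝ) :
    Continuous fun e => bellman p q K e x y := by
  have hθ : 0 ≤ 1 - 2 / p := by rw [sub_nonneg, div_le_one (by linarith)]; exact hp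
  unfold bellman
  have h1 : Continuous fun e : ℝ => (x ^ 2 + e) ^ (p / 2) :=
    (by fun_prop : Continuous fun e : ℝ => x ^ 2 + e).rpow_const fun _ => Or.inr (by linarith)
  have h2 : Continuous fun e : ℝ => (y ^ 2 + e) ^ (q / 2) :=
    (by fun_prop : Continuous fun e : ℝ => y ^ 2 + e).rpow_const fun _ => Or.inr (by linarith)
  exact (h2.const_mul K).add (((h1.add h2).rpow_const fun _ => Or.inr hθ).const_mul _)

end Bellman

section Embedding

variable {E : Type*} [NormedAddCommGroup E] [InnerProductSpace ℝ E] [FiniteDimensional ℝ E]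
  [MeasurableSpace E] [BorelSpace E] {ι : Type*} [Fintype ι] {p q : ℝ}

lemma SchwartzMap.integrable_abs_rpow (f : 𝓢(E, ℝ)) {r : ℝ} (hr : 0 < r) :
    Integrable fun x => |f x| ^ r := by
  have h := (f.memLp (ENNReal.ofReal r) volume).integrable_norm_rpow
    (by simpa using hr) ENNReal.ofReal_ne_top
  rw [ENNReal.toReal_ofReal hr.le] at h
  exact h

lemma SchwartzMap.lpNorm_rpow (f : 𝓢(E, ℝ)) {r : ℝ} (hr : 0 < r) :
    lpNorm f (ENNReal.ofReal r) volume ^ r = ∫ x, |f x| ^ r := by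
  rw [lpNorm_eq_integral_norm_rpow_toReal (by simpa using hr) ENNReal.ofReal_ne_top
    f.continuous.aestronglyMeasurable, ENNReal.toReal_ofReal hr.le,
    rpow_inv_rpow (integral_nonneg fun x => by positivity) hr.ne']
  rfl

lemma integrable_abs_heat_mul_abs_heat (f g : 𝓢(E, ℝ)) (T : ℝ) :
    Integrable (fun z : ℝ × E => |heat z.1 f z.2| * |heat z.1 g z.2|) (slab E T) := by
  have h := (integrable_comp_heat_mul_heat_slab (Φ := fun x _ => x) (by fun_prop) f f g T).abs
  simpa only [abs_mul] using h

lemma integral_abs_heat_lineDeriv_mul_le_bellman (hp : 2 ≤ p) (hpq : p.HolderConjugate q)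
    (b : OrthonormalBasis ι ℝ E) (i j : ι) (f g : 𝓢(E, ℝ)) {T : ℝ} (hT : 0 ≤ T) {e : ℝ}
    (he : 0 < e) (hint : Integrable fun x => bellman p q (bellmanConst q) e (f x) (g x) -
      bellman p q (bellmanConst q) e 0 0) :
    ∫ z, |heat z.1 (∂_{b i} f : 𝓢(E, ℝ)) z.2| * |heat z.1 (∂_{b j} g : 𝓢(E, ℝ)) z.2| ∂(slab E T) ≤
      ∫ x, (bellman p q (bellmanConst q) e (f x) (g x) -
        bellman p q (bellmanConst q) e 0 0) := by
  obtain ⟨Bx, By, Bxx, Bxy, Byy, hB, hconv⟩ := exists_hasHessian_bellman hp hpq he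
  obtain ⟨hi, hflow⟩ := hB.integral_flow b f g hT
  have hle : ∫ x, (bellman p q (bellmanConst q) e (f x) (g x) -
      bellman p q (bellmanConst q) e (heat T f x) (heat T g x)) ≤
      ∫ x, (bellman p q (bellmanConst q) e (f x) (g x) - bellman p q (bellmanConst q) e 0 0) :=
    integral_mono hi hint fun x => sub_le_sub_left
      (bellman_zero_zero_le (bellmanConst_pos hpq.symm.lt).le hpq.symm.pos.le he.le _ _) _
  have hmain : ∫ z, 2 * (|heat z.1 (∂_{b i} f : 𝓢(E, ℝ)) z.2| *
      |heat z.1 (∂_{b j} g : 𝓢(E, ℝ)) z.2|) ∂(slab E T) ≤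
      ∫ z, ∑ k, hessForm Bxx Bxy Byy f g (b k) z ∂(slab E T) := by
    refine integral_mono ((integrable_abs_heat_mul_abs_heat _ _ T).const_mul 2)
      (integrable_finsetSum _ fun k _ => hB.integrable_hessForm f g (b k) T) fun z => ?_
    obtain ⟨D, F, hD, hF, hDF, hq⟩ := hconv (heat z.1 f z.2) (heat z.1 g z.2)
    set ξ : ι → ℝ := fun k => heat z.1 (∂_{b k} f : 𝓢(E, ℝ)) z.2
    set η : ι → ℝ := fun k => heat z.1 (∂_{b k} g : 𝓢(E, ℝ)) z.2
    calc 2 * (|ξ i| * |η j|) ≤ D * ξ i ^ 2 + F * η j ^ 2 := by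
          rw [← sq_abs (ξ i), ← sq_abs (η j)]
          have h1 : |ξ i| * |η j| ≤ (√D * |ξ i|) * (√F * |η j|) := by
            have : 1 ≤ √D * √F := by
              rw [← sqrt_mul hD.le]; exact one_le_sqrt.2 hDF
            nlinarith [mul_nonneg (abs_nonneg (ξ i)) (abs_nonneg (η j))]
          nlinarith [sq_nonneg (√D * |ξ i| - √F * |η j|), sq_sqrt hD.le, sq_sqrt hF.le]
      _ ≤ D * ∑ k, ξ k ^ 2 + F * ∑ k, η k ^ 2 := by
          gcongr
          · exact Finset.single_le_sum (fun k _ => sq_nonneg (ξ k)) (Finset.mem_univ i)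
          · exact Finset.single_le_sum (fun k _ => sq_nonneg (η k)) (Finset.mem_univ j)
      _ = ∑ k, (D * ξ k ^ 2 + F * η k ^ 2) := by
          rw [Finset.sum_add_distrib, Finset.mul_sum, Finset.mul_sum]
      _ ≤ ∑ k, hessForm Bxx Bxy Byy f g (b k) z := by
          refine Finset.sum_le_sum fun k _ => (hq (ξ k) (η k)).trans_eq ?_
          simp only [hessForm, ξ, η]; ring
  rw [integral_const_mul, hflow] at hmain
  linarith

lemma integral_abs_heat_lineDeriv_mul_le_add (hp : 2 ≤ p) (hpq : p.HolderConjugate q)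
    (b : OrthonormalBasis ι ℝ E) (i j : ι) (f g : 𝓢(E, ℝ)) {T : ℝ} (hT : 0 ≤ T) :
    ∫ z, |heat z.1 (∂_{b i} f : 𝓢(E, ℝ)) z.2| * |heat z.1 (∂_{b j} g : 𝓢(E, ℝ)) z.2| ∂(slab E T) ≤
      (bellmanConst q + 1) * ((∫ x, |f x| ^ p) + ∫ x, |g x| ^ q) := by
  set K := bellmanConst q with hKdef
  have hK : 0 < K := bellmanConst_pos hpq.symm.lt
  have hq := hpq.symm.lt
  have hq2 : q ≤ 2 := by nlinarith [hpq.mul_eq_add]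
  obtain ⟨M, -, hM⟩ := f.exists_abs_le
  obtain ⟨N, -, hN⟩ := g.exists_abs_le
  set L := ((M ^ 2 + 1) ^ (p / 2) + (N ^ 2 + 1) ^ (q / 2)) ^ (1 - 2 / p)
  have hbd : Integrable fun x => K * |g x| ^ q + L * f x ^ 2 := by
    refine ((g.integrable_abs_rpow hpq.symm.pos).const_mul K).add (Integrable.const_mul ?_ L)
    simpa using f.integrable_abs_rpow (r := 2) (by norm_num)
  set ε : ℕ → ℝ := fun n => 1 / ((n : ℝ) + 1)
  have hε : ∀ n, 0 < ε n := fun n => by positivity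
  have hε1 : ∀ n, ε n ≤ 1 := fun n => by
    simp only [ε]; rw [div_le_one (by positivity)]; linarith [n.cast_nonneg (α := ℝ)]
  have hcont : ∀ n, Continuous fun x => bellman p q K (ε n) (f x) (g x) -
      bellman p q K (ε n) 0 0 := fun n => by
    obtain ⟨Bx, By, Bxx, Bxy, Byy, hB, -⟩ := exists_hasHessian_bellman hp hpq (hε n)
    exact (hB.base.continuous.comp (f.continuous.prodMk g.continuous)).sub continuous_const
  have hnorm : ∀ n x, ‖bellman p q K (ε n) (f x) (g x) - bellman p q K (ε n) 0 0‖ ≤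
      K * |g x| ^ q + L * f x ^ 2 := fun n x => by
    rw [norm_of_nonneg (sub_nonneg.2 (bellman_zero_zero_le hK.le hpq.symm.pos.le (hε n).le _ _))]
    exact bellman_sub_le hp hK.le hpq.symm.pos.le hq2 (hε n).le (hε1 n) (hM x) (hN x)
  have hint : ∀ n, Integrable fun x => bellman p q K (ε n) (f x) (g x) -
      bellman p q K (ε n) 0 0 := fun n =>
    hbd.mono' (hcont n).aestronglyMeasurable (Eventually.of_forall (hnorm n))
  have hεlim : Tendsto ε atTop (𝓝 0) := tendsto_one_div_add_atTop_nhds_zero_nat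
  have hlimpt : ∀ x, Tendsto (fun n => bellman p q K (ε n) (f x) (g x) -
      bellman p q K (ε n) 0 0) atTop
      (𝓝 (bellman p q K 0 (f x) (g x) - bellman p q K 0 0 0)) := fun x =>
    (((continuous_bellman_param hp hpq.symm.pos.le _ _).tendsto 0).comp hεlim).sub
      (((continuous_bellman_param hp hpq.symm.pos.le _ _).tendsto 0).comp hεlim)
  have hlim : Tendsto (fun n => ∫ x, (bellman p q K (ε n) (f x) (g x) -
      bellman p q K (ε n) 0 0)) atTop
      (𝓝 (∫ x, (bellman p q K 0 (f x) (g x) - bellman p q K 0 0 0))) :=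
    tendsto_integral_of_dominated_convergence _ (fun n => (hcont n).aestronglyMeasurable) hbd
      (fun n => Eventually.of_forall (hnorm n)) (Eventually.of_forall hlimpt)
  have hfp := f.integrable_abs_rpow hpq.pos
  have hgq := g.integrable_abs_rpow hpq.symm.pos
  calc _ ≤ ∫ x, (bellman p q K 0 (f x) (g x) - bellman p q K 0 0 0) :=
        ge_of_tendsto' hlim fun n =>
          integral_abs_heat_lineDeriv_mul_le_bellman hp hpq b i j f g hT (hε n) (hint n)
    _ ≤ ∫ x, (K + 1) * (|f x| ^ p + |g x| ^ q) := by
        refine integral_mono_of_nonneg (Eventually.of_forall fun x => sub_nonneg.2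
          (bellman_zero_zero_le hK.le hpq.symm.pos.le le_rfl _ _)) ((hfp.add hgq).const_mul _)
          (Eventually.of_forall fun x => (bellman_limit_le hp hpq.symm.pos _ _).trans ?_)
        have : 0 ≤ K * |f x| ^ p := by positivity
        linarith
    _ = _ := by rw [integral_const_mul, integral_add hfp hgq]

lemma heat_smul (c t : ℝ) (f : 𝓢(E, ℝ)) (x : E) :
    heat t (c • f : 𝓢(E, ℝ)) x = c * heat t f x := by
  simp only [heat, smul_apply, smul_eq_mul, mul_assoc, integral_const_mul]

/-- The bilinear embedding for the heat flow, for exponents `p ≥ 2 ≥ q`. -/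
lemma integral_abs_heat_lineDeriv_mul_le_of_two_le (hp : 2 ≤ p) (hpq : p.HolderConjugate q)
    (b : OrthonormalBasis ι ℝ E) (i j : ι) (f g : 𝓢(E, ℝ)) {T : ℝ} (hT : 0 ≤ T) :
    ∫ z, |heat z.1 (∂_{b i} f : 𝓢(E, ℝ)) z.2| * |heat z.1 (∂_{b j} g : 𝓢(E, ℝ)) z.2| ∂(slab E T) ≤
      2 * (bellmanConst q + 1) * (lpNorm f (ENNReal.ofReal p) volume *
        lpNorm g (ENNReal.ofReal q) volume) := by
  set I := ∫ z, |heat z.1 (∂_{b i} f : 𝓢(E, ℝ)) z.2| *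
    |heat z.1 (∂_{b j} g : 𝓢(E, ℝ)) z.2| ∂(slab E T)
  set A := lpNorm f (ENNReal.ofReal p) volume
  set B := lpNorm g (ENNReal.ofReal q) volume
  have hA : 0 ≤ A := lpNorm_nonneg
  have hB : 0 ≤ B := lpNorm_nonneg
  have hK : 0 < bellmanConst q := bellmanConst_pos hpq.symm.lt
  have key : ∀ δ > 0, I ≤ 2 * (bellmanConst q + 1) * ((A + δ) * (B + δ)) := by
    intro δ hδ
    have hint : ∀ (h : 𝓢(E, ℝ)) {r : ℝ}, 0 < r →
        ∫ x, |((lpNorm h (ENNReal.ofReal r) volume + δ)⁻¹ • h : 𝓢(E, ℝ)) x| ^ r ≤ 1 := by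
      intro h r hr
      have h0 : 0 ≤ lpNorm h (ENNReal.ofReal r) volume := lpNorm_nonneg
      have e1 : ∀ x, |((lpNorm h (ENNReal.ofReal r) volume + δ)⁻¹ • h : 𝓢(E, ℝ)) x| ^ r =
          ((lpNorm h (ENNReal.ofReal r) volume + δ)⁻¹) ^ r * |h x| ^ r := fun x => by
        rw [smul_apply, smul_eq_mul, abs_mul, abs_of_nonneg (by positivity),
          mul_rpow (by positivity) (abs_nonneg _)]
      simp only [e1]
      rw [integral_const_mul, ← h.lpNorm_rpow hr, ← mul_rpow (by positivity) h0]
      refine rpow_le_one (by positivity) ?_ hr.le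
      rw [inv_mul_le_one₀ (by positivity)]
      linarith
    have h := integral_abs_heat_lineDeriv_mul_le_add hp hpq b i j ((A + δ)⁻¹ • f)
      ((B + δ)⁻¹ • g) hT
    simp only [lineDerivOp_smul, heat_smul, abs_mul] at h
    have e1 : ∀ z : ℝ × E, |(A + δ)⁻¹| * |heat z.1 (∂_{b i} f : 𝓢(E, ℝ)) z.2| *
        (|(B + δ)⁻¹| * |heat z.1 (∂_{b j} g : 𝓢(E, ℝ)) z.2|) =
        ((A + δ) * (B + δ))⁻¹ * (|heat z.1 (∂_{b i} f : 𝓢(E, ℝ)) z.2| *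
          |heat z.1 (∂_{b j} g : 𝓢(E, ℝ)) z.2|) := fun z => by
      rw [abs_of_nonneg (by positivity : 0 ≤ (A + δ)⁻¹),
        abs_of_nonneg (by positivity : 0 ≤ (B + δ)⁻¹), mul_inv]
      ring
    simp only [e1] at h
    rw [integral_const_mul] at h
    have h2 : ((A + δ) * (B + δ))⁻¹ * I ≤ (bellmanConst q + 1) * (1 + 1) := by
      refine h.trans ?_
      gcongr
      · exact hint f hpq.pos
      · exact hint g hpq.symm.pos
    rw [inv_mul_le_iff₀ (by positivity)] at h2
    linarith
  have hlim : Tendsto (fun δ : ℝ => 2 * (bellmanConst q + 1) * ((A + δ) * (B + δ))) (𝓝[>] 0)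
      (𝓝 (2 * (bellmanConst q + 1) * ((A + 0) * (B + 0)))) :=
    ((by fun_prop : Continuous fun δ : ℝ =>
      2 * (bellmanConst q + 1) * ((A + δ) * (B + δ))).tendsto 0).mono_left nhdsWithin_le_nhds
  have := ge_of_tendsto hlim (eventually_nhdsWithin_of_forall key)
  simpa using this

/-- The bilinear embedding for the heat flow. -/
lemma exists_integral_abs_heat_lineDeriv_mul_le (hpq : p.HolderConjugate q) :
    ∃ C : ℝ, 0 ≤ C ∧ ∀ (b : OrthonormalBasis ι ℝ E) (i j : ι) (f g : 𝓢(E, ℝ)) {T : ℝ}, 0 ≤ T →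
      ∫ z, |heat z.1 (∂_{b i} f : 𝓢(E, ℝ)) z.2| * |heat z.1 (∂_{b j} g : 𝓢(E, ℝ)) z.2|
        ∂(slab E T) ≤
      C * (lpNorm f (ENNReal.ofReal p) volume * lpNorm g (ENNReal.ofReal q) volume) := by
  rcases le_total 2 p with hp | hp
  · exact ⟨2 * (bellmanConst q + 1), by have := bellmanConst_pos hpq.symm.lt; positivity,
      fun b i j f g _ hT => integral_abs_heat_lineDeriv_mul_le_of_two_le hp hpq b i j f g hT⟩
  · have hq : 2 ≤ q := by nlinarith [hpq.mul_eq_add, hpq.lt]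
    refine ⟨2 * (bellmanConst p + 1), by have := bellmanConst_pos hpq.lt; positivity,
      fun b i j f g T hT => ?_⟩
    have h := integral_abs_heat_lineDeriv_mul_le_of_two_le hq hpq.symm b j i g f hT
    simpa only [mul_comm] using h

end Embedding

section Pairing

lemma SchwartzMap.lineDerivOp_comm {E : Type*} [NormedAddCommGroup E] [NormedSpace ℝ E]
    (f : 𝓢(E, ℝ)) (v w : E) :
    (∂_{v} (∂_{w} f : 𝓢(E, ℝ)) : 𝓢(E, ℝ)) = ∂_{w} (∂_{v} f : 𝓢(E, ℝ)) := by
  have key : ∀ (v w x : E), (∂_{v} (∂_{w} f : 𝓢(E, ℝ)) : 𝓢(E, ℝ)) x =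
      fderiv ℝ (fderiv ℝ f) x v w := fun v w x => by
    have hd : DifferentiableAt ℝ (fderiv ℝ f) x :=
      ((f.smooth 2).fderiv_right (m := 1) (by norm_num)).differentiable (by norm_num) x
    rw [lineDerivOp_apply_eq_fderiv,
      show ((∂_{w} f : 𝓢(E, ℝ)) : E → ℝ) = fun y => fderiv ℝ f y w from
        funext fun y => lineDerivOp_apply_eq_fderiv w f y]
    rw [fderiv_clm_apply hd (differentiableAt_const w)]
    simp
  ext x
  rw [key, key]
  exact ((f.smooth 2).contDiffAt.isSymmSndFDerivAt (by simp)) v w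

variable {E : Type*} [NormedAddCommGroup E] [InnerProductSpace ℝ E] [FiniteDimensional ℝ E]
  [MeasurableSpace E] [BorelSpace E] {ι : Type*} [Fintype ι] {p q : ℝ}

lemma integral_heat_mul_heat_lineDeriv (f h : 𝓢(E, ℝ)) (t : ℝ) (v : E) :
    ∫ x, heat t f x * heat t (∂_{v} h : 𝓢(E, ℝ)) x =
      -∫ x, heat t (∂_{v} f : 𝓢(E, ℝ)) x * heat t h x := by
  simpa using integral_comp_heat_mul_heat_lineDeriv HasPartials.fst' (by fun_prop) (by fun_prop)
    f f h t v

lemma integral_heat_lineDeriv_swap (φ g : 𝓢(E, ℝ)) (t : ℝ) (v w : E) :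
    ∫ x, heat t (∂_{v} (∂_{w} φ : 𝓢(E, ℝ)) : 𝓢(E, ℝ)) x * heat t (∂_{v} g : 𝓢(E, ℝ)) x =
      ∫ x, heat t (∂_{v} (∂_{v} φ : 𝓢(E, ℝ)) : 𝓢(E, ℝ)) x * heat t (∂_{w} g : 𝓢(E, ℝ)) x := by
  have h1 := integral_heat_mul_heat_lineDeriv (∂_{v} φ) (∂_{v} g) t w
  have h2 := integral_heat_mul_heat_lineDeriv (∂_{v} φ) (∂_{w} g) t v
  rw [SchwartzMap.lineDerivOp_comm φ v w]
  rw [SchwartzMap.lineDerivOp_comm g w v] at h1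
  linarith

lemma integrable_heat_mul_heat_slab (f g : 𝓢(E, ℝ)) (T : ℝ) :
    Integrable (fun z : ℝ × E => heat z.1 f z.2 * heat z.1 g z.2) (slab E T) :=
  integrable_comp_heat_mul_heat_slab (Φ := fun x _ => x) (by fun_prop) f f g T

/-- The Littlewood–Paley type identity for `∫ ∂ᵢφ g`. -/
lemma integral_mul_sub_integral_heat_mul (b : OrthonormalBasis ι ℝ E) (i : ι) (φ g : 𝓢(E, ℝ))
    {T : ℝ} (hT : 0 ≤ T) :
    ∫ x, ((∂_{b i} φ : 𝓢(E, ℝ)) x * g x - heat T (∂_{b i} φ : 𝓢(E, ℝ)) x * heat T g x) =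
      ∫ z, heat z.1 (∑ k, ∂_{b k} (∂_{b k} φ : 𝓢(E, ℝ)) : 𝓢(E, ℝ)) z.2 *
        heat z.1 (∂_{b i} g : 𝓢(E, ℝ)) z.2 ∂(slab E T) := by
  have hB : HasHessian (fun x y => x * y) (fun _ y => y) (fun x _ => x) (fun _ _ => 0)
      (fun _ _ => 1) (fun _ _ => 0) :=
    ⟨(HasPartials.fst'.mul HasPartials.snd').congr (fun x y => by ring) (fun x y => by ring),
      HasPartials.snd', HasPartials.fst', by fun_prop, by fun_prop, by fun_prop⟩
  have hflow := (hB.integral_flow b (∂_{b i} φ) g hT).2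
  have e1 : ∀ k z, hessForm (fun _ _ => 0) (fun _ _ => 1) (fun _ _ => 0)
      (∂_{b i} φ : 𝓢(E, ℝ)) g (b k) z =
      2 * (heat z.1 (∂_{b k} (∂_{b i} φ : 𝓢(E, ℝ)) : 𝓢(E, ℝ)) z.2 *
        heat z.1 (∂_{b k} g : 𝓢(E, ℝ)) z.2) := fun k z => by
    simp only [hessForm]; ring
  simp only [e1, ← Finset.mul_sum] at hflow
  rw [integral_const_mul] at hflow
  rw [← mul_left_cancel₀ two_ne_zero hflow]
  simp only [heat_sum, Finset.sum_mul]
  rw [integral_finsetSum _ fun k _ => integrable_heat_mul_heat_slab _ _ T,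
    integral_finsetSum _ fun k _ => integrable_heat_mul_heat_slab _ _ T]
  refine Finset.sum_congr rfl fun k _ => ?_
  rw [integral_prod _ (integrable_heat_mul_heat_slab _ _ T),
    integral_prod _ (integrable_heat_mul_heat_slab _ _ T)]
  exact integral_congr_ae (Eventually.of_forall fun t => integral_heat_lineDeriv_swap φ g t _ _)

lemma tendsto_integral_heat_mul_heat [Nontrivial E] (f g : 𝓢(E, ℝ)) :
    Tendsto (fun T => ∫ x, heat T f x * heat T g x) atTop (𝓝 0) := by
  have hlim : Tendsto (fun T : ℝ => gaussDensity (0 : E) * (∫ y, |f y|) *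
      (√T ^ Module.finrank ℝ E)⁻¹ * ∫ y, |g y|) atTop (𝓝 0) := by
    have h := ((tendsto_pow_atTop (Module.finrank_pos (R := ℝ) (M := E)).ne').comp
      tendsto_sqrt_atTop).inv_tendsto_atTop
    simpa using (h.const_mul (gaussDensity (0 : E) * ∫ y, |f y|)).mul_const (∫ y, |g y|)
  refine squeeze_zero_norm' ?_ hlim
  filter_upwards [eventually_gt_atTop 0] with T hT
  set M := gaussDensity (0 : E) * (∫ y, |f y|) * (√T ^ Module.finrank ℝ E)⁻¹
  have hM : 0 ≤ M := (abs_nonneg _).trans (abs_heat_le_integral f hT 0)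
  calc ‖∫ x, heat T f x * heat T g x‖ ≤ ∫ x, M * |heat T g x| := by
        refine norm_integral_le_of_norm_le ((integrable_heat g T).abs.const_mul M)
          (Eventually.of_forall fun x => ?_)
        rw [norm_mul]
        exact mul_le_mul_of_nonneg_right (abs_heat_le_integral f hT x) (abs_nonneg _)
    _ ≤ M * ∫ y, |g y| := by
        rw [integral_const_mul]
        exact mul_le_mul_of_nonneg_left (integral_abs_heat_le g T) hM

lemma abs_integral_lineDeriv_mul_le [Nontrivial E] (hpq : p.HolderConjugate q)
    (b : OrthonormalBasis ι ℝ E) :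
    ∃ C : ℝ, 0 ≤ C ∧ ∀ (φ : 𝓢(E, ℝ)) (v : ι → 𝓢(E, ℝ)),
      (∑ k, ∂_{b k} (∂_{b k} φ : 𝓢(E, ℝ)) : 𝓢(E, ℝ)) = ∑ k, ∂_{b k} (v k) →
      ∀ (i : ι) (g : 𝓢(E, ℝ)), |∫ x, (∂_{b i} φ : 𝓢(E, ℝ)) x * g x| ≤
        C * (∑ k, lpNorm (v k) (ENNReal.ofReal p) volume) *
          lpNorm g (ENNReal.ofReal q) volume := by
  obtain ⟨C, hC, hmain⟩ := exists_integral_abs_heat_lineDeriv_mul_le (E := E) (ι := ι) hpq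
  refine ⟨C, hC, fun φ v hv i g => ?_⟩
  set R := C * (∑ k, lpNorm (v k) (ENNReal.ofReal p) volume) *
    lpNorm g (ENNReal.ofReal q) volume with hR
  set I := ∫ x, (∂_{b i} φ : 𝓢(E, ℝ)) x * g x
  have hint0 : Integrable fun x => (∂_{b i} φ : 𝓢(E, ℝ)) x * g x := by
    simpa only [heat_zero] using integrable_comp_heat_mul_heat (Φ := fun x _ => x) (by fun_prop)
      (∂_{b i} φ) (∂_{b i} φ) g 0
  have hbound : ∀ T : ℝ, 0 ≤ T →
      |I - ∫ x, heat T (∂_{b i} φ : 𝓢(E, ℝ)) x * heat T g x| ≤ R := by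
    intro T hT
    rw [← integral_sub hint0 (integrable_comp_heat_mul_heat (Φ := fun x _ => x) (by fun_prop)
      (∂_{b i} φ) (∂_{b i} φ) g T), integral_mul_sub_integral_heat_mul b i φ g hT, hv]
    simp only [heat_sum, Finset.sum_mul]
    rw [integral_finsetSum _ fun k _ => integrable_heat_mul_heat_slab _ _ T, hR, mul_assoc,
      Finset.sum_mul, Finset.mul_sum]
    refine (Finset.abs_sum_le_sum_abs _ _).trans (Finset.sum_le_sum fun k _ => ?_)
    refine (abs_integral_le_integral_abs).trans ?_
    simp only [abs_mul]
    exact hmain b k i (v k) g hT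
  have hlim : Tendsto (fun T => |I - ∫ x, heat T (∂_{b i} φ : 𝓢(E, ℝ)) x * heat T g x|) atTop
      (𝓝 |I - 0|) :=
    (tendsto_const_nhds.sub (tendsto_integral_heat_mul_heat _ g)).abs
  rw [sub_zero] at hlim
  exact le_of_tendsto hlim ((eventually_ge_atTop 0).mono hbound)

/-- The converse of Hölder's inequality, tested on Schwartz functions. -/
lemma lpNorm_le_of_forall_integral_mul_le (hpq : p.HolderConjugate q) (f : 𝓢(E, ℝ)) {M : ℝ}
    (hM : 0 ≤ M) (h : ∀ g : 𝓢(E, ℝ), |∫ x, f x * g x| ≤ M * lpNorm g (ENNReal.ofReal q) volume) :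
    lpNorm f (ENNReal.ofReal p) volume ≤ M := by
  have hp1 : 1 ≤ ENNReal.ofReal p := by simpa using hpq.lt.le
  have hq1 : 1 ≤ ENNReal.ofReal q := by simpa using hpq.symm.lt.le
  have holder : ∀ k : E → ℝ, MemLp k (ENNReal.ofReal q) volume →
      Integrable (fun x => f x * k x) ∧ |∫ x, f x * k x| ≤
        lpNorm f (ENNReal.ofReal p) volume * lpNorm k (ENNReal.ofReal q) volume := by
    intro k hk
    have := hpq.ennrealOfReal
    refine ⟨(f.memLp (ENNReal.ofReal p) volume).integrable_mul hk, ?_⟩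
    have h1 := integral_mul_norm_le_Lp_mul_Lq hpq (f.memLp (ENNReal.ofReal p) volume) hk
    rw [lpNorm_eq_integral_norm_rpow_toReal (by simpa using hpq.pos) ENNReal.ofReal_ne_top
      f.continuous.aestronglyMeasurable, ENNReal.toReal_ofReal hpq.pos.le,
      lpNorm_eq_integral_norm_rpow_toReal (by simpa using hpq.symm.pos) ENNReal.ofReal_ne_top
      hk.aestronglyMeasurable, ENNReal.toReal_ofReal hpq.symm.pos.le]
    simp only [one_div] at h1
    refine (abs_integral_le_integral_abs).trans ?_
    simpa only [abs_mul, norm_eq_abs] using h1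
  set N := lpNorm f (ENNReal.ofReal p) volume with hN
  have hN0 : 0 ≤ N := lpNorm_nonneg
  set k : E → ℝ := fun x => f x * |f x| ^ (p - 2) with hkdef
  have habs : ∀ x, |k x| = |f x| ^ (p - 1) := fun x => by
    rw [hkdef, abs_mul, abs_of_nonneg (rpow_nonneg (abs_nonneg (f x)) _)]
    rcases (abs_nonneg (f x)).eq_or_lt with h0 | h0
    · rw [← h0, zero_mul, zero_rpow (by linarith [hpq.lt])]
    · rw [mul_comm, ← rpow_add_one h0.ne']; ring_nf
  have hkp : ∀ x, |k x| ^ q = |f x| ^ p := fun x => by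
    rw [habs, ← rpow_mul (abs_nonneg _)]
    congr 1; linarith [hpq.mul_eq_add]
  have hfk : ∀ x, f x * k x = |f x| ^ p := fun x => by
    have h1 : f x * k x = |f x| * |k x| := by
      simp only [hkdef]
      rw [abs_mul, abs_of_nonneg (rpow_nonneg (abs_nonneg (f x)) _), ← mul_assoc, ← mul_assoc,
        abs_mul_abs_self]
    rw [h1, habs, mul_comm]
    rcases (abs_nonneg (f x)).eq_or_lt with h0 | h0
    · rw [← h0, mul_zero, zero_rpow hpq.ne_zero]
    · rw [← rpow_add_one h0.ne']; ring_nf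
  have hkm : AEStronglyMeasurable k volume :=
    (f.continuous.measurable.mul (f.continuous.abs.measurable.pow_const _)).aestronglyMeasurable
  have hk : MemLp k (ENNReal.ofReal q) volume := by
    rw [← integrable_norm_rpow_iff hkm (by simpa using hpq.symm.pos) ENNReal.ofReal_ne_top,
      ENNReal.toReal_ofReal hpq.symm.pos.le]
    simpa only [norm_eq_abs, hkp] using f.integrable_abs_rpow hpq.pos
  have hkN : lpNorm k (ENNReal.ofReal q) volume = N ^ (p / q) := by
    rw [lpNorm_eq_integral_norm_rpow_toReal (by simpa using hpq.symm.pos) ENNReal.ofReal_ne_top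
      hkm, ENNReal.toReal_ofReal hpq.symm.pos.le]
    simp only [norm_eq_abs, hkp]
    rw [← f.lpNorm_rpow hpq.pos, ← rpow_mul hN0, div_eq_mul_inv]
  have key : ∀ ε > 0, N ^ p ≤ M * (N ^ (p / q) + ε) + N * ε := by
    intro ε hε
    obtain ⟨g, hg1, hg2, hg3⟩ := hk.exist_eLpNorm_sub_le ENNReal.ofReal_ne_top hq1 hε
    set g' : 𝓢(E, ℝ) := hg1.toSchwartzMap hg2
    have hg' : ∀ x, g' x = g x := fun x => rfl
    have hgm : MemLp g (ENNReal.ofReal q) volume := g'.memLp _ _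
    have hd : lpNorm (k - g) (ENNReal.ofReal q) volume ≤ ε := by
      rw [← toReal_eLpNorm (hk.sub hgm).aestronglyMeasurable]
      exact ENNReal.toReal_le_of_le_ofReal hε.le hg3
    have hg : lpNorm g (ENNReal.ofReal q) volume ≤ N ^ (p / q) + ε := by
      have := lpNorm_sub_le (f := k) (g := k - g) hk hq1
      rw [sub_sub_cancel, hkN] at this
      linarith
    have hsplit : N ^ p = (∫ x, f x * g x) + ∫ x, f x * (k - g) x := by
      rw [← integral_add (holder g hgm).1 (holder _ (hk.sub hgm)).1, f.lpNorm_rpow hpq.pos]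
      refine integral_congr_ae (Eventually.of_forall fun x => ?_)
      simp only [Pi.sub_apply, ← hfk]; ring
    have h1 := (le_abs_self _).trans (h g')
    have h2 := (le_abs_self _).trans (holder _ (hk.sub hgm)).2
    have h3 : M * lpNorm g (ENNReal.ofReal q) volume ≤ M * (N ^ (p / q) + ε) := by gcongr
    have h4 : N * lpNorm (k - g) (ENNReal.ofReal q) volume ≤ N * ε := by gcongr
    calc N ^ p = _ := hsplit
      _ ≤ _ := add_le_add (h1.trans h3) (h2.trans h4)
  have hlim : Tendsto (fun ε : ℝ => M * (N ^ (p / q) + ε) + N * ε) (𝓝[>] 0)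
      (𝓝 (M * (N ^ (p / q) + 0) + N * 0)) :=
    ((by fun_prop : Continuous fun ε : ℝ =>
      M * (N ^ (p / q) + ε) + N * ε).tendsto 0).mono_left nhdsWithin_le_nhds
  have hfin := ge_of_tendsto hlim (eventually_nhdsWithin_of_forall key)
  rw [add_zero, mul_zero, add_zero] at hfin
  rcases hN0.eq_or_lt with h0 | h0
  · rw [← h0]; exact hM
  · have e1 : N ^ p = N * N ^ (p / q) := by
      have hpq' : p = 1 + p / q := by
        have := hpq.symm.ne_zero
        field_simp; linarith [hpq.mul_eq_add]
      conv_lhs => rw [hpq', rpow_add h0, rpow_one]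
    rw [e1] at hfin
    exact le_of_mul_le_mul_right hfin (rpow_pos_of_pos h0 _)

/-- The gradient of a solution of `Δφ = div v` is controlled by `v` in `L^p`. -/
theorem exists_lpNorm_lineDeriv_le_sum [Nontrivial E] (hp : 1 < p) (b : OrthonormalBasis ι ℝ E) :
    ∃ C : ℝ, 0 ≤ C ∧ ∀ (φ : 𝓢(E, ℝ)) (v : ι → 𝓢(E, ℝ)),
      (∑ k, ∂_{b k} (∂_{b k} φ : 𝓢(E, ℝ)) : 𝓢(E, ℝ)) = ∑ k, ∂_{b k} (v k) →
      ∀ i, lpNorm (∂_{b i} φ : 𝓢(E, ℝ)) (ENNReal.ofReal p) volume ≤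
        C * ∑ k, lpNorm (v k) (ENNReal.ofReal p) volume := by
  have hpq := Real.HolderConjugate.conjExponent hp
  obtain ⟨C, hC, hmain⟩ := abs_integral_lineDeriv_mul_le hpq b
  exact ⟨C, hC, fun φ v hv i => lpNorm_le_of_forall_integral_mul_le hpq _
    (mul_nonneg hC (Finset.sum_nonneg fun k _ => lpNorm_nonneg)) (hmain φ v hv i)⟩

end Pairing

section Vorticity

lemma toE3_apply (f : Fin 3 → ℝ) (i : Fin 3) : toE3 f i = f i := rfl

lemma norm_toE3_le (f : Fin 3 → ℝ) : ‖toE3 f‖ ≤ ∑ i, |f i| := by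
  rw [EuclideanSpace.norm_eq]
  refine sqrt_le_iff.2 ⟨by positivity, ?_⟩
  simp only [norm_eq_abs, toE3_apply]
  exact Finset.sum_sq_le_sq_sum_of_nonneg fun i _ => abs_nonneg _

lemma eLpNorm_toE3_le {p : ENNReal} (hp : 1 ≤ p)
    (w : Fin 3 → 𝓢(EuclideanSpace ℝ (Fin 3), ℝ)) :
    eLpNorm (fun x => toE3 fun i => w i x) p volume ≤ ∑ i, eLpNorm (w i) p volume := by
  calc eLpNorm (fun x => toE3 fun i => w i x) p volume
      ≤ eLpNorm (∑ i, fun x => ‖w i x‖) p volume := by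
        refine eLpNorm_mono_real fun x => ?_
        simpa only [Finset.sum_apply, norm_eq_abs] using norm_toE3_le fun i => w i x
    _ ≤ ∑ i, eLpNorm (fun x => ‖w i x‖) p volume :=
        eLpNorm_sum_le (fun i _ => (w i).continuous.norm.aestronglyMeasurable) hp
    _ = _ := by simp only [eLpNorm_norm]

lemma eLpNorm_le_eLpNorm_toE3 (p : ENNReal) (w : Fin 3 → 𝓢(EuclideanSpace ℝ (Fin 3), ℝ))
    (i : Fin 3) : eLpNorm (w i) p volume ≤ eLpNorm (fun x => toE3 fun i => w i x) p volume :=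
  eLpNorm_mono fun x => PiLp.norm_apply_le (toE3 fun i => w i x) i

lemma continuous_toE3 (w : Fin 3 → 𝓢(EuclideanSpace ℝ (Fin 3), ℝ)) :
    Continuous fun x => toE3 fun i => w i x :=
  (PiLp.continuous_toLp 2 _).comp (continuous_pi fun i => (w i).continuous)

lemma basisFun_eq_ee (i : Fin 3) : EuclideanSpace.basisFun (Fin 3) ℝ i = ee i :=
  EuclideanSpace.basisFun_apply _ _ i

lemma pdW_eq_lineDerivOp (u : Fin 3 → 𝓢(EuclideanSpace ℝ (Fin 3), ℝ)) (i j : Fin 3)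
    (x : EuclideanSpace ℝ (Fin 3)) :
    pdW u i j x = (∂_{ee i} (u j) : 𝓢(EuclideanSpace ℝ (Fin 3), ℝ)) x :=
  (lineDerivOp_apply_eq_fderiv (ee i) (u j) x).symm

/-- The `k`-th component of `e₃ × ω`, which is `∂ₖu₃ - ∂₃uₖ`. -/
lemma cross_vortW (u : Fin 3 → 𝓢(EuclideanSpace ℝ (Fin 3), ℝ)) (x : EuclideanSpace ℝ (Fin 3)) :
    cross ![0, 0, 1] (vortW u x) = fun k => pdW u k 2 x - pdW u 2 k x := by
  funext k
  fin_cases k <;> simp [cross, vortW]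

end Vorticity

/-- For every `1 < q < ∞` there is a constant `C_q > 0` such that for
every divergence-free Schwartz vector field `u : ℝ³ → ℝ³` with vorticity `ω = ∇ × u`,
`‖∇u₃‖_{L^q} + ‖∂₃u‖_{L^q} ≤ C_q ‖e₃ × ω‖_{L^q}`. -/
theorem grad_add_d3_le_e3_cross_vort (q : ℝ) (hq1 : 1 < q) :
    ∃ C : ℝ, 0 < C ∧
      ∀ u : Fin 3 → SchwartzMap (EuclideanSpace ℝ (Fin 3)) ℝ,
        (∀ x, ∑ i, pdW u i i x = 0) →
        eLpNorm (fun x => toE3 fun i => pdW u i 2 x) (ENNReal.ofReal q) volume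
            + eLpNorm (fun x => toE3 fun i => pdW u 2 i x) (ENNReal.ofReal q) volume
          ≤ ENNReal.ofReal C *
              eLpNorm (fun x => toE3 (cross ![0, 0, 1] (vortW u x)))
                (ENNReal.ofReal q) volume := by
  obtain ⟨C, hC, hmain⟩ := exists_lpNorm_lineDeriv_le_sum hq1 (EuclideanSpace.basisFun (Fin 3) ℝ)
  simp only [basisFun_eq_ee] at hmain
  refine ⟨18 * C + 1, by positivity, fun u hdiv => ?_⟩
  set Q := ENNReal.ofReal q
  have hQ : 1 ≤ Q := by simpa [Q] using hq1.le
  set a : Fin 3 → 𝓢(EuclideanSpace ℝ (Fin 3), ℝ) := fun k => ∂_{ee k} (u 2)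
  set v : Fin 3 → 𝓢(EuclideanSpace ℝ (Fin 3), ℝ) := fun k => ∂_{ee k} (u 2) - ∂_{ee 2} (u k)
  have hdiv' : (∑ k, ∂_{ee k} (u k) : 𝓢(EuclideanSpace ℝ (Fin 3), ℝ)) = 0 := by
    ext x
    simpa [sum_apply, pdW_eq_lineDerivOp] using hdiv x
  have hv : (∑ k, ∂_{ee k} (∂_{ee k} (u 2) : 𝓢(EuclideanSpace ℝ (Fin 3), ℝ)) :
      𝓢(EuclideanSpace ℝ (Fin 3), ℝ)) = ∑ k, ∂_{ee k} (v k) := by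
    have h : (∑ k, ∂_{ee k} (∂_{ee 2} (u k) : 𝓢(EuclideanSpace ℝ (Fin 3), ℝ)) :
        𝓢(EuclideanSpace ℝ (Fin 3), ℝ)) = 0 := by
      simp only [fun k => (u k).lineDerivOp_comm (ee k) (ee 2)]
      rw [← lineDerivOp_sum, hdiv', lineDerivOp_zero]
    simp only [v, sub_eq_add_neg, lineDerivOp_add, lineDerivOp_neg, Finset.sum_add_distrib,
      Finset.sum_neg_distrib, h, neg_zero, add_zero]
  have hcross : (fun x => toE3 (cross ![0, 0, 1] (vortW u x))) =
      fun x => toE3 fun k => v k x := by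
    funext x
    simp only [cross_vortW, pdW_eq_lineDerivOp]
    rfl
  have hgrad : (fun x => toE3 fun i => pdW u i 2 x) = fun x => toE3 fun k => a k x := by
    simp only [pdW_eq_lineDerivOp, a]
  have hd3 : (fun x => toE3 fun i => pdW u 2 i x) =
      (fun x => toE3 fun k => a k x) - fun x => toE3 fun k => v k x := by
    funext x
    ext k
    simp [toE3_apply, pdW_eq_lineDerivOp, a, v]
  rw [hcross, hd3, hgrad]
  set A := eLpNorm (fun x => toE3 fun k => a k x) Q volume
  set V := eLpNorm (fun x => toE3 fun k => v k x) Q volume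
  have hcomp : ∀ i, eLpNorm (a i) Q volume ≤ ENNReal.ofReal (3 * C) * V := fun i => by
    rw [← ofReal_lpNorm ((a i).memLp Q volume)]
    calc ENNReal.ofReal (lpNorm (a i) Q volume)
        ≤ ENNReal.ofReal (C * ∑ k, lpNorm (v k) Q volume) :=
          ENNReal.ofReal_le_ofReal (hmain (u 2) v hv i)
      _ = ENNReal.ofReal C * ∑ k, eLpNorm (v k) Q volume := by
          rw [ENNReal.ofReal_mul hC, ENNReal.ofReal_sum_of_nonneg fun k _ => lpNorm_nonneg]
          simp only [ofReal_lpNorm ((v _).memLp Q volume)]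
      _ ≤ ENNReal.ofReal C * ∑ _k : Fin 3, V := by
          gcongr with k
          exact eLpNorm_le_eLpNorm_toE3 Q v k
      _ = ENNReal.ofReal (3 * C) * V := by
          rw [ENNReal.ofReal_mul (by norm_num)]
          simp only [Finset.sum_const, Finset.card_univ, Fintype.card_fin, nsmul_eq_mul,
            ENNReal.ofReal_ofNat, Nat.cast_ofNat]
          ring
  have hA : A ≤ ENNReal.ofReal (9 * C) * V := by
    calc A ≤ ∑ i, eLpNorm (a i) Q volume := eLpNorm_toE3_le hQ a
      _ ≤ ∑ _i : Fin 3, ENNReal.ofReal (3 * C) * V := Finset.sum_le_sum fun i _ => hcomp i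
      _ = ENNReal.ofReal (9 * C) * V := by
          rw [show 9 * C = 3 * (3 * C) by ring, ENNReal.ofReal_mul (q := 3 * C) (by norm_num)]
          simp only [Finset.sum_const, Finset.card_univ, Fintype.card_fin, nsmul_eq_mul,
            ENNReal.ofReal_ofNat, Nat.cast_ofNat]
          ring
  calc A + eLpNorm ((fun x => toE3 fun k => a k x) - fun x => toE3 fun k => v k x) Q volume
      ≤ A + (A + V) := by
        gcongr
        exact eLpNorm_sub_le (continuous_toE3 a).aestronglyMeasurable
          (continuous_toE3 v).aestronglyMeasurable hQ
    _ ≤ ENNReal.ofReal (9 * C) * V + (ENNReal.ofReal (9 * C) * V + V) := by gcongr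
    _ = ENNReal.ofReal (18 * C + 1) * V := by
        rw [show 18 * C + 1 = 9 * C + (9 * C + 1) by ring,
          ENNReal.ofReal_add (by positivity) (by positivity),
          ENNReal.ofReal_add (by positivity) (by positivity), ENNReal.ofReal_one]
        ring
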